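/- Let H ⊂ ℝⁿ be a Hanner polytope. Then in an arbitrarily small neighborhood of any point (q,p) ∈ ∂(H × H°) there passes a closed classical billiard trajectory of the minimal length (length 4) in the configuration H × H°; i.e., the union of all minimal-length classical billiard trajectories (viewed as subsets of phase space ∂(H × H°)) is dense in ∂(H × H°). -/

import Mathlib

open MeasureTheory
open scoped Pointwise

namespace Billiard

/-- The canonical pairing `⟨p, q⟩ = ∑ i, p i * q i` on `ℝⁿ`. -/
noncomputable def pairing {n : ℕ} (p q : Fin n → ℝ) : ℝ := ∑ i, p i * q i

/-- The polar set `H° = {p : ⟨p, q⟩ ≤ 1 for all q ∈ H}`. -/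
def polarSet {n : ℕ} (H : Set (Fin n → ℝ)) : Set (Fin n → ℝ) :=
  {p | ∀ q ∈ H, pairing p q ≤ 1}

/-- The support function of `T`, i.e. the norm `‖v‖_{T} = max_{p ∈ T} ⟨p, v⟩`. -/
noncomputable def suppFn {n : ℕ} (T : Set (Fin n → ℝ)) (v : Fin n → ℝ) : ℝ :=
  sSup ((fun p => pairing p v) '' T)

/-- Projection of `ℝ^{k+l}` onto the first `k` coordinates. -/
def splitL {k l : ℕ} (x : Fin (k + l) → ℝ) : Fin k → ℝ := fun i => x (Fin.castAdd l i)

/-- Projection of `ℝ^{k+l}` onto the last `l` coordinates. -/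
def splitR {k l : ℕ} (x : Fin (k + l) → ℝ) : Fin l → ℝ := fun j => x (Fin.natAdd k j)

/-- `K ⊕_∞ L = K × L ⊂ ℝ^{k+l}`. -/
def sumInfty {k l : ℕ} (K : Set (Fin k → ℝ)) (L : Set (Fin l → ℝ)) :
    Set (Fin (k + l) → ℝ) :=
  {x | splitL x ∈ K ∧ splitR x ∈ L}

/-- `K ⊕₁ L = conv((K × {0}) ∪ ({0} × L)) ⊂ ℝ^{k+l}`. -/
def sumOne {k l : ℕ} (K : Set (Fin k → ℝ)) (L : Set (Fin l → ℝ)) :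
    Set (Fin (k + l) → ℝ) :=
  convexHull ℝ ({x | splitL x ∈ K ∧ splitR x = 0} ∪ {x | splitL x = 0 ∧ splitR x ∈ L})

/-- Hanner polytopes, defined inductively: the segment `[-1,1] ⊂ ℝ` is a Hanner polytope,
and `K ⊕_∞ L`, `K ⊕₁ L` are Hanner polytopes whenever `K`, `L` are. -/
inductive IsHanner : ∀ n : ℕ, Set (Fin n → ℝ) → Prop
  | segment : IsHanner 1 {x | |x 0| ≤ 1}
  | inftySum {k l : ℕ} {K : Set (Fin k → ℝ)} {L : Set (Fin l → ℝ)} :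
      IsHanner k K → IsHanner l L → IsHanner (k + l) (sumInfty K L)
  | oneSum {k l : ℕ} {K : Set (Fin k → ℝ)} {L : Set (Fin l → ℝ)} :
      IsHanner k K → IsHanner l L → IsHanner (k + l) (sumOne K L)

/-- `u` is the outer normal of the facet of `H` containing `q`, normalized to lie in `∂H°`:
`u ∈ H°`, `⟨u, q⟩ = 1`, and `u` is the unique such vector. The uniqueness encodes that `q`
lies in the relative interior of a facet of the polytope `H`. -/
def IsUniqueNormal {n : ℕ} (H : Set (Fin n → ℝ)) (q u : Fin n → ℝ) : Prop :=
  u ∈ polarSet H ∧ pairing u q = 1 ∧ ∀ v ∈ polarSet H, pairing v q = 1 → v = u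

/-- A classical closed billiard trajectory in the configuration `H × T` (with `T = H°`):
closed `m`-periodic sequences of coordinates `q i ∈ ∂H` and momenta `p i ∈ ∂T`, each in
the relative interior of a facet (encoded by uniqueness of the normalized outer normal),
satisfying the reflection rule `p (i+1) − p i = −λ i • n_H(q i)` with `λ i > 0` and the
motion rule `q (i+1) − q i = μ i • n_T(p (i+1))` with `μ i > 0`. -/
structure ClassicalTraj (n : ℕ) (H T : Set (Fin n → ℝ)) where
  m : ℕ
  m_pos : 0 < m
  q : ℕ → Fin n → ℝ
  p : ℕ → Fin n → ℝ
  nq : ℕ → Fin n → ℝ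
  np : ℕ → Fin n → ℝ
  lam : ℕ → ℝ
  mu : ℕ → ℝ
  q_mem : ∀ i, q i ∈ frontier H
  p_mem : ∀ i, p i ∈ frontier T
  q_periodic : ∀ i, q (i + m) = q i
  p_periodic : ∀ i, p (i + m) = p i
  nq_spec : ∀ i, IsUniqueNormal H (q i) (nq i)
  np_spec : ∀ i, IsUniqueNormal T (p i) (np i)
  lam_pos : ∀ i, 0 < lam i
  mu_pos : ∀ i, 0 < mu i
  reflection : ∀ i, p (i + 1) - p i = (-(lam i)) • nq i
  motion : ∀ i, q (i + 1) - q i = mu i • np (i + 1)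

/-- A trajectory is simple if it does not traverse the same closed route more than once,
i.e. it has no period smaller than `m`. -/
def ClassicalTraj.IsSimple {n : ℕ} {H T : Set (Fin n → ℝ)}
    (τ : ClassicalTraj n H T) : Prop :=
  ∀ d : ℕ, 0 < d → d < τ.m → ¬(∀ i, τ.q (i + d) = τ.q i ∧ τ.p (i + d) = τ.p i)

/-- The length of the trajectory, measured in the norm `‖·‖_T` with `T = H°`. -/
noncomputable def ClassicalTraj.length {n : ℕ} {H T : Set (Fin n → ℝ)}
    (τ : ClassicalTraj n H T) : ℝ :=
  ∑ i ∈ Finset.range τ.m, suppFn T (τ.q (i + 1) - τ.q i)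

/-- The trace of a trajectory in phase space `∂H × ∂T`: the union of the segments swept by
the coordinate while the momentum is constant, and by the momentum while the coordinate is
constant. -/
noncomputable def ClassicalTraj.trace {n : ℕ} {H T : Set (Fin n → ℝ)}
    (τ : ClassicalTraj n H T) : Set ((Fin n → ℝ) × (Fin n → ℝ)) :=
  ⋃ i ∈ Finset.range τ.m,
    ((fun x => (x, τ.p (i + 1))) '' segment ℝ (τ.q i) (τ.q (i + 1)) ∪
      (fun y => (τ.q i, y)) '' segment ℝ (τ.p i) (τ.p (i + 1)))

/-- The coordinate polygonal line of a trajectory, as a subset of `∂H`. -/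
noncomputable def ClassicalTraj.coordTrace {n : ℕ} {H T : Set (Fin n → ℝ)}
    (τ : ClassicalTraj n H T) : Set (Fin n → ℝ) :=
  ⋃ i ∈ Finset.range τ.m, segment ℝ (τ.q i) (τ.q (i + 1))

/-- The momentum polygonal line of a trajectory, as a subset of `∂T`. -/
noncomputable def ClassicalTraj.momTrace {n : ℕ} {H T : Set (Fin n → ℝ)}
    (τ : ClassicalTraj n H T) : Set (Fin n → ℝ) :=
  ⋃ i ∈ Finset.range τ.m, segment ℝ (τ.p i) (τ.p (i + 1))

open Set Filter Topology

lemma pairing_eq_dotProduct {n : ℕ} (p q : Fin n → ℝ) : pairing p q = p ⬝ᵥ q := rfl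

lemma pairing_comm {n : ℕ} (p q : Fin n → ℝ) : pairing p q = pairing q p := by
  simp only [pairing_eq_dotProduct, dotProduct_comm]

lemma pairing_add_right {n : ℕ} (p q r : Fin n → ℝ) :
    pairing p (q + r) = pairing p q + pairing p r := by
  simp only [pairing_eq_dotProduct, dotProduct_add]

lemma pairing_sub_left {n : ℕ} (p q r : Fin n → ℝ) :
    pairing (p - q) r = pairing p r - pairing q r := by
  simp only [pairing_eq_dotProduct, sub_dotProduct]

lemma pairing_smul_right {n : ℕ} (c : ℝ) (p q : Fin n → ℝ) :
    pairing p (c • q) = c * pairing p q := by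
  simp only [pairing_eq_dotProduct, dotProduct_smul, smul_eq_mul]

lemma pairing_smul_left {n : ℕ} (c : ℝ) (p q : Fin n → ℝ) :
    pairing (c • p) q = c * pairing p q := by
  simp only [pairing_eq_dotProduct, smul_dotProduct, smul_eq_mul]

lemma pairing_neg_right {n : ℕ} (p q : Fin n → ℝ) : pairing p (-q) = -pairing p q := by
  simp only [pairing_eq_dotProduct, dotProduct_neg]

lemma pairing_neg_left {n : ℕ} (p q : Fin n → ℝ) : pairing (-p) q = -pairing p q := by
  simp only [pairing_eq_dotProduct, neg_dotProduct]

lemma pairing_zero_left {n : ℕ} (q : Fin n → ℝ) : pairing 0 q = 0 := by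
  simp only [pairing_eq_dotProduct, zero_dotProduct]

/-- `N` and `M` are mutually dual norms on `ℝⁿ`, with `n` positive. -/
structure DualNorms {n : ℕ} (N M : Seminorm ℝ (Fin n → ℝ)) : Prop where
  cont_left : Continuous N
  cont_right : Continuous M
  pairing_le : ∀ p q, pairing p q ≤ M p * N q
  norming_left : ∀ q, ∃ p, M p ≤ 1 ∧ pairing p q = N q
  norming_right : ∀ p, ∃ q, N q ≤ 1 ∧ pairing p q = M p
  exists_unit_left : ∃ q, N q = 1
  exists_unit_right : ∃ p, M p = 1

namespace DualNorms

variable {n : ℕ} {N M : Seminorm ℝ (Fin n → ℝ)}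

lemma symm (h : DualNorms N M) : DualNorms M N where
  cont_left := h.cont_right
  cont_right := h.cont_left
  pairing_le p q := by
    rw [pairing_comm, mul_comm]; exact h.pairing_le q p
  norming_left q := by
    obtain ⟨p, hp⟩ := h.norming_right q
    exact ⟨p, hp.1, by rw [pairing_comm, hp.2]⟩
  norming_right q := by
    obtain ⟨p, hp⟩ := h.norming_left q
    exact ⟨p, hp.1, by rw [pairing_comm, hp.2]⟩
  exists_unit_left := h.exists_unit_right
  exists_unit_right := h.exists_unit_left

lemma eq_zero (h : DualNorms N M) {q : Fin n → ℝ} (hq : N q = 0) : q = 0 := by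
  have h1 := h.pairing_le q q
  rw [hq, mul_zero, pairing_eq_dotProduct] at h1
  have h2 : 0 ≤ q ⬝ᵥ q := Finset.sum_nonneg fun i _ => mul_self_nonneg (q i)
  exact dotProduct_self_eq_zero.1 (le_antisymm h1 h2)

lemma exists_unit_smul (h : DualNorms N M) (q : Fin n → ℝ) :
    ∃ v, N v = 1 ∧ q = N q • v := by
  by_cases hq : N q = 0
  · obtain ⟨v, hv⟩ := h.exists_unit_left
    exact ⟨v, hv, by rw [hq, zero_smul, h.eq_zero hq]⟩
  · refine ⟨(N q)⁻¹ • q, ?_, by rw [smul_inv_smul₀ hq]⟩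
    rw [map_smul_eq_mul, norm_inv, Real.norm_eq_abs, abs_of_nonneg (apply_nonneg N q),
      inv_mul_cancel₀ hq]

lemma polarSet_eq (h : DualNorms N M) : polarSet {q | N q ≤ 1} = {p | M p ≤ 1} := by
  ext p
  constructor
  · intro hp
    obtain ⟨q, hq, hpq⟩ := h.norming_right p
    change M p ≤ 1
    rw [← hpq]
    exact hp q hq
  · intro hp q hq
    calc pairing p q ≤ M p * N q := h.pairing_le p q
      _ ≤ 1 := mul_le_one₀ hp (apply_nonneg N q) hq

lemma suppFn_eq (h : DualNorms N M) (v : Fin n → ℝ) : suppFn {p | M p ≤ 1} v = N v := by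
  apply IsGreatest.csSup_eq
  constructor
  · obtain ⟨p, hp, hpq⟩ := h.norming_left v
    exact ⟨p, hp, hpq⟩
  · rintro _ ⟨p, hp, rfl⟩
    calc pairing p v ≤ M p * N v := h.pairing_le p v
      _ ≤ N v := mul_le_of_le_one_left (apply_nonneg N v) hp

lemma mem_frontier (h : DualNorms N M) {q : Fin n → ℝ} (hq : N q = 1) :
    q ∈ frontier {q | N q ≤ 1} := by
  rw [(isClosed_le h.cont_left continuous_const).frontier_eq]
  refine ⟨hq.le, fun hint => ?_⟩
  have hc : Tendsto (fun c : ℝ => c • q) (𝓝 1) (𝓝 q) := by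
    have : Continuous fun c : ℝ => c • q := by fun_prop
    simpa using this.tendsto 1
  have hev : ∀ᶠ c in 𝓝[>] (1 : ℝ), c • q ∈ {q | N q ≤ 1} :=
    (hc.mono_left nhdsWithin_le_nhds) (mem_interior_iff_mem_nhds.1 hint)
  obtain ⟨c, hc1, hc2⟩ := (hev.and self_mem_nhdsWithin).exists
  have hc3 : (1 : ℝ) < c := hc2
  have : N (c • q) = c := by
    rw [map_smul_eq_mul, hq, mul_one, Real.norm_eq_abs, abs_of_pos (by linarith)]
  have h4 : N (c • q) ≤ 1 := hc1
  linarith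

end DualNorms

lemma exists_lt_one_dist_lt {n : ℕ} (N : Seminorm ℝ (Fin n → ℝ)) {q : Fin n → ℝ}
    (hq : N q ≤ 1) {ε : ℝ} (hε : 0 < ε) : ∃ q', N q' < 1 ∧ dist q' q < ε := by
  have hc : Tendsto (fun c : ℝ => c • q) (𝓝 1) (𝓝 q) := by
    have : Continuous fun c : ℝ => c • q := by fun_prop
    simpa using this.tendsto 1
  have hev : ∀ᶠ c in 𝓝[<] (1 : ℝ), dist (c • q) q < ε :=
    (hc.mono_left nhdsWithin_le_nhds) (Metric.ball_mem_nhds q hε)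
  obtain ⟨c, hc1, hc2, hc3⟩ := (hev.and (Ioo_mem_nhdsLT (zero_lt_one' ℝ))).exists
  refine ⟨c • q, ?_, hc1⟩
  rw [map_smul_eq_mul, Real.norm_eq_abs, abs_of_pos hc2]
  nlinarith [apply_nonneg N q]

/-- `u` is the only vector of the unit ball of `M` whose pairing with `q` is `1`. -/
def UniqueNormal {n : ℕ} (M : Seminorm ℝ (Fin n → ℝ)) (q u : Fin n → ℝ) : Prop :=
  M u ≤ 1 ∧ pairing u q = 1 ∧ ∀ v, M v ≤ 1 → pairing v q = 1 → v = u

lemma UniqueNormal.neg {n : ℕ} {M : Seminorm ℝ (Fin n → ℝ)} {q u : Fin n → ℝ}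
    (h : UniqueNormal M q u) : UniqueNormal M (-q) (-u) := by
  refine ⟨by rw [map_neg_eq_map]; exact h.1, ?_, fun v hv hvq => ?_⟩
  · rw [pairing_neg_left, pairing_neg_right, neg_neg, h.2.1]
  · rw [← h.2.2 (-v) (by rwa [map_neg_eq_map]) (by rwa [pairing_neg_left, ← pairing_neg_right]),
      neg_neg]

lemma UniqueNormal.norm_eq {n : ℕ} {N M : Seminorm ℝ (Fin n → ℝ)} (h : DualNorms N M)
    {q u : Fin n → ℝ} (hu : UniqueNormal M q u) (hq : N q ≤ 1) : M u = 1 := by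
  have h1 := h.pairing_le u q
  rw [hu.2.1] at h1
  nlinarith [hu.1, apply_nonneg M u, apply_nonneg N q]

lemma UniqueNormal.isUniqueNormal {n : ℕ} {N M : Seminorm ℝ (Fin n → ℝ)} (h : DualNorms N M)
    {q u : Fin n → ℝ} (hu : UniqueNormal M q u) : IsUniqueNormal {q | N q ≤ 1} q u := by
  unfold IsUniqueNormal
  rw [h.polarSet_eq]
  exact hu

/-- A closed billiard trajectory of length `4` between the unit balls of `N` and `M`, all of
whose open segments run in the interiors of the two balls. -/
structure Orbit {n : ℕ} (N M : Seminorm ℝ (Fin n → ℝ)) where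
  m : ℕ
  m_pos : 0 < m
  q : ℕ → Fin n → ℝ
  p : ℕ → Fin n → ℝ
  nq : ℕ → Fin n → ℝ
  np : ℕ → Fin n → ℝ
  lam : ℕ → ℝ
  mu : ℕ → ℝ
  q_norm : ∀ i, N (q i) = 1
  p_norm : ∀ i, M (p i) = 1
  q_periodic : ∀ i, q (i + m) = q i
  p_periodic : ∀ i, p (i + m) = p i
  nq_spec : ∀ i, UniqueNormal M (q i) (nq i)
  np_spec : ∀ i, UniqueNormal N (p i) (np i)
  lam_pos : ∀ i, 0 < lam i
  mu_pos : ∀ i, 0 < mu i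
  reflection : ∀ i, p (i + 1) = p i - lam i • nq i
  motion : ∀ i, q (i + 1) = q i + mu i • np (i + 1)
  sum_mu : ∑ i ∈ Finset.range m, mu i = 4
  q_inside : ∀ i, ∀ θ ∈ Ioo (0 : ℝ) 1, N ((1 - θ) • q i + θ • q (i + 1)) < 1
  p_inside : ∀ i, ∀ θ ∈ Ioo (0 : ℝ) 1, M ((1 - θ) • p i + θ • p (i + 1)) < 1

namespace Orbit

variable {n : ℕ} {N M : Seminorm ℝ (Fin n → ℝ)}

lemma sum_lam (O : Orbit N M) : ∑ i ∈ Finset.range O.m, O.lam (i + 1) = 4 := by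
  have key : ∀ i, O.mu i - O.lam (i + 1) =
      pairing (O.p (i + 1 + 1)) (O.q (i + 1)) - pairing (O.p (i + 1)) (O.q i) := by
    intro i
    have h1 := (O.np_spec (i + 1)).2.1
    have h2 := (O.nq_spec (i + 1)).2.1
    rw [pairing_comm] at h1
    rw [O.reflection (i + 1), pairing_sub_left, pairing_smul_left, h2]
    rw [O.motion i, pairing_add_right, pairing_smul_right, h1]
    ring
  have h := Finset.sum_range_sub (fun i => pairing (O.p (i + 1)) (O.q i)) O.m
  simp only [← key, Finset.sum_sub_distrib, O.sum_mu] at h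
  have h0 := O.q_periodic 0
  have h1 := O.p_periodic 1
  rw [zero_add] at h0
  rw [add_comm] at h1
  rw [h0, h1, zero_add, sub_self] at h
  linarith

/-- The trajectory obtained by exchanging the roles of coordinates and momenta. -/
def dual (O : Orbit N M) : Orbit M N where
  m := O.m
  m_pos := O.m_pos
  q i := O.p (i + 1)
  p i := -O.q i
  nq i := O.np (i + 1)
  np i := -O.nq i
  lam := O.mu
  mu i := O.lam (i + 1)
  q_norm i := O.p_norm (i + 1)
  p_norm i := by rw [map_neg_eq_map, O.q_norm]
  q_periodic i := by rw [add_right_comm, O.p_periodic]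
  p_periodic i := by rw [O.q_periodic]
  nq_spec i := O.np_spec (i + 1)
  np_spec i := (O.nq_spec i).neg
  lam_pos := O.mu_pos
  mu_pos i := O.lam_pos (i + 1)
  reflection i := by rw [O.motion, neg_add, sub_eq_add_neg]
  motion i := by rw [O.reflection (i + 1), smul_neg, sub_eq_add_neg]
  sum_mu := O.sum_lam
  q_inside i := O.p_inside (i + 1)
  p_inside i θ hθ := by
    rw [smul_neg, smul_neg, ← neg_add, map_neg_eq_map]
    exact O.q_inside i θ hθ

/-- An orbit as a classical trajectory between a unit ball and its polar. -/
def toClassicalTraj (O : Orbit N M) (h : DualNorms N M) :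
    ClassicalTraj n {q | N q ≤ 1} {p | M p ≤ 1} where
  m := O.m
  m_pos := O.m_pos
  q := O.q
  p := O.p
  nq := O.nq
  np := O.np
  lam := O.lam
  mu := O.mu
  q_mem i := h.mem_frontier (O.q_norm i)
  p_mem i := h.symm.mem_frontier (O.p_norm i)
  q_periodic := O.q_periodic
  p_periodic := O.p_periodic
  nq_spec i := (O.nq_spec i).isUniqueNormal h
  np_spec i := (O.np_spec i).isUniqueNormal h.symm
  lam_pos := O.lam_pos
  mu_pos := O.mu_pos
  reflection i := by rw [O.reflection, neg_smul]; abel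
  motion i := by rw [O.motion]; abel

lemma length_toClassicalTraj (O : Orbit N M) (h : DualNorms N M) :
    (O.toClassicalTraj h).length = 4 := by
  rw [← O.sum_mu]
  refine Finset.sum_congr rfl fun i _ => ?_
  change suppFn {p | M p ≤ 1} (O.q (i + 1) - O.q i) = O.mu i
  rw [h.suppFn_eq, O.motion, add_sub_cancel_left, map_smul_eq_mul, Real.norm_eq_abs,
    abs_of_pos (O.mu_pos i), (O.np_spec (i + 1)).norm_eq h.symm (O.p_norm _).le, mul_one]

lemma q_add_mul_period (O : Orbit N M) (i k : ℕ) : O.q (i + k * O.m) = O.q i := by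
  induction k with
  | zero => simp
  | succ k ih => rw [Nat.succ_mul, ← add_assoc, O.q_periodic, ih]

lemma p_add_mul_period (O : Orbit N M) (i k : ℕ) : O.p (i + k * O.m) = O.p i := by
  induction k with
  | zero => simp
  | succ k ih => rw [Nat.succ_mul, ← add_assoc, O.p_periodic, ih]

end Orbit

/-- Points on the motion phases of orbits are dense. -/
def DenseMotion {n : ℕ} (N M : Seminorm ℝ (Fin n → ℝ)) : Prop :=
  ∀ q p, N q < 1 → M p = 1 → ∀ ε > 0, ∃ O : Orbit N M, ∃ i, ∃ θ ∈ Ioo (0 : ℝ) 1,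
    dist ((1 - θ) • O.q i + θ • O.q (i + 1)) q < ε ∧ dist (O.p (i + 1)) p < ε

/-- Points on the reflection phases of orbits are dense. -/
def DenseReflection {n : ℕ} (N M : Seminorm ℝ (Fin n → ℝ)) : Prop :=
  ∀ q p, N q = 1 → M p < 1 → ∀ ε > 0, ∃ O : Orbit N M, ∃ i, ∃ θ ∈ Ioo (0 : ℝ) 1,
    dist (O.q i) q < ε ∧ dist ((1 - θ) • O.p i + θ • O.p (i + 1)) p < ε

lemma DenseMotion.dual {n : ℕ} {N M : Seminorm ℝ (Fin n → ℝ)} (h : DenseMotion N M) :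
    DenseReflection M N := by
  intro q p hq hp ε hε
  obtain ⟨O, i, θ, hθ, h1, h2⟩ := h (-p) q (by rwa [map_neg_eq_map]) hq ε hε
  refine ⟨O.dual, i, θ, hθ, h2, ?_⟩
  change dist ((1 - θ) • (-O.q i) + θ • (-O.q (i + 1))) p < ε
  rwa [smul_neg, smul_neg, ← neg_add, ← dist_neg_neg, neg_neg]

lemma DenseReflection.dual {n : ℕ} {N M : Seminorm ℝ (Fin n → ℝ)} (h : DenseReflection N M) :
    DenseMotion M N := by
  intro q p hq hp ε hε
  obtain ⟨O, i, θ, hθ, h1, h2⟩ := h (-p) q (by rwa [map_neg_eq_map]) hq ε hε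
  obtain ⟨j, hj⟩ : ∃ j, j + 1 = i + O.m := ⟨i + O.m - 1, by have := O.m_pos; omega⟩
  have hq' : O.q (j + 1) = O.q i := by rw [hj, O.q_periodic]
  have hp' : O.p (j + 1) = O.p i := by rw [hj, O.p_periodic]
  have hp'' : O.p (j + 1 + 1) = O.p (i + 1) := by rw [hj, add_right_comm, O.p_periodic]
  refine ⟨O.dual, j, θ, hθ, ?_, ?_⟩
  · change dist ((1 - θ) • O.p (j + 1) + θ • O.p (j + 1 + 1)) q < ε
    rwa [hp', hp'']
  · change dist (-O.q (j + 1)) p < ε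
    rwa [hq', ← dist_neg_neg, neg_neg]

lemma exists_mem_Ico_of_unbounded {e : ℕ → ℝ} (hub : ∀ b, ∃ i, b < e i) {t : ℝ}
    (ht : e 0 ≤ t) : ∃ i, e i ≤ t ∧ t < e (i + 1) := by
  classical
  have hf := Nat.find_spec (hub t)
  have hmin := fun k => Nat.find_min (m := k) (hub t)
  generalize Nat.find (hub t) = k at hf hmin
  cases k with
  | zero => linarith
  | succ i => exact ⟨i, not_lt.1 (hmin i (Nat.lt_succ_self i)), hf⟩

lemma eq_of_mem_Ico_of_strictMono {e : ℕ → ℝ} (he : StrictMono e) {t : ℝ} {i j : ℕ}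
    (hi : e i ≤ t ∧ t < e (i + 1)) (hj : e j ≤ t ∧ t < e (j + 1)) : i = j := by
  have h1 := he.lt_iff_lt.1 (hi.1.trans_lt hj.2)
  have h2 := he.lt_iff_lt.1 (hj.1.trans_lt hi.2)
  omega

/-- At time `t` the curve `(q, p)` is reflected: `p` jumps from `x` to `y` against the normal
of the unit ball of `N` at `q t`. -/
structure ReflectsAt {n : ℕ} (N M : Seminorm ℝ (Fin n → ℝ)) (q p : ℝ → Fin n → ℝ) (t : ℝ)
    (x y : Fin n → ℝ) : Prop where
  norm_eq : N (q t) = 1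
  jump : ∃ (u : Fin n → ℝ) (lam : ℝ), 0 < lam ∧ UniqueNormal M (q t) u ∧ y = x - lam • u
  sides : ∃ δ > 0, ∀ s, 0 < s → s < δ → p (t - s) = x ∧ p (t + s) = y
  inside : ∀ θ ∈ Ioo (0 : ℝ) 1, M ((1 - θ) • x + θ • y) < 1

/-- A closed trajectory of length `4` parametrized by the time of the motion of `q`;
`ev` is the set of reflection times. Only nonnegative times are meaningful. -/
structure Curve {n : ℕ} (N M : Seminorm ℝ (Fin n → ℝ)) where
  q : ℝ → Fin n → ℝ
  p : ℝ → Fin n → ℝ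
  ev : Set ℝ
  q_periodic : ∀ t, 0 ≤ t → q (t + 4) = q t
  p_periodic : ∀ t, 0 ≤ t → p (t + 4) = p t
  ev_periodic : ∀ t, 0 ≤ t → (t + 4 ∈ ev ↔ t ∈ ev)
  ev_pos : ∃ e ∈ ev, 0 < e
  ev_finite : ∀ b, (ev ∩ Icc 0 b).Finite
  motion : ∀ s t, 0 ≤ s → s < t → (∀ r ∈ Ioo s t, r ∉ ev) →
    ∃ x v, M x = 1 ∧ UniqueNormal N x v ∧ (∀ r ∈ Ioo s t, p r = x) ∧
      ∀ r ∈ Icc s t, q r = q s + (r - s) • v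
  reflects : ∀ t ∈ ev, 0 < t → ∃ x y, ReflectsAt N M q p t x y
  inside : ∀ t, 0 < t → t ∉ ev → N (q t) < 1

namespace Curve

variable {n : ℕ} {N M : Seminorm ℝ (Fin n → ℝ)} (C : Curve N M)

lemma periodic_nat {t : ℝ} (ht : 0 ≤ t) (k : ℕ) :
    C.q (t + 4 * k) = C.q t ∧ C.p (t + 4 * k) = C.p t ∧ (t + 4 * k ∈ C.ev ↔ t ∈ C.ev) := by
  induction k with
  | zero => simp
  | succ k ih =>
    have h0 : 0 ≤ t + 4 * (k : ℝ) := by positivity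
    have h1 : t + 4 * ((k + 1 : ℕ) : ℝ) = t + 4 * k + 4 := by push_cast; ring
    rw [h1, C.q_periodic _ h0, C.p_periodic _ h0, C.ev_periodic _ h0]
    exact ih

lemma exists_ev_gt (b : ℝ) : ∃ e ∈ C.ev, 0 < e ∧ b < e := by
  obtain ⟨e, he, he0⟩ := C.ev_pos
  obtain ⟨k, hk⟩ := exists_nat_gt b
  refine ⟨e + 4 * k, (C.periodic_nat he0.le k).2.2.2 he, by positivity, ?_⟩
  have : (0 : ℝ) ≤ k := k.cast_nonneg
  linarith

lemma exists_gap {t : ℝ} (ht : 0 < t) :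
    ∃ δ > 0, δ < t ∧ ∀ r, |r - t| < δ → r ≠ t → r ∉ C.ev := by
  have hfin : ((C.ev ∩ Icc 0 (t + 1)) \ {t}).Finite := (C.ev_finite (t + 1)).sdiff
  have hmem : ((C.ev ∩ Icc 0 (t + 1)) \ {t})ᶜ ∈ 𝓝 t :=
    hfin.isClosed.isOpen_compl.mem_nhds (by simp)
  obtain ⟨δ, hδ, hb⟩ := Metric.mem_nhds_iff.1 hmem
  refine ⟨min δ (min (t / 2) 1), by positivity, ?_, ?_⟩
  · exact (min_le_right _ _).trans_lt ((min_le_left _ _).trans_lt (by linarith))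
  · intro r hr hrt hre
    rw [lt_min_iff, lt_min_iff] at hr
    have h1 := abs_lt.1 hr.2.1
    have h2 := abs_lt.1 hr.2.2
    exact hb (show dist r t < δ from hr.1) ⟨⟨hre, by linarith, by linarith⟩, hrt⟩

lemma exists_still {t : ℝ} (ht : 0 < t) (hte : t ∉ C.ev) :
    M (C.p t) = 1 ∧ (∃ δ > 0, ∀ r, |r - t| < δ → r ∉ C.ev ∧ C.p r = C.p t) ∧
      ContinuousAt C.q t := by
  obtain ⟨δ, hδ, hδt, hg⟩ := C.exists_gap ht
  have hg' : ∀ r, |r - t| < δ → r ∉ C.ev := by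
    intro r hr
    by_cases h : r = t
    · rwa [h]
    · exact hg r hr h
  obtain ⟨x, v, hx, -, hp, hq⟩ := C.motion (t - δ) (t + δ) (by linarith) (by linarith)
    (fun r hr => hg' r (abs_lt.2 ⟨by linarith [hr.1], by linarith [hr.2]⟩))
  have hpt := hp t ⟨by linarith, by linarith⟩
  refine ⟨by rw [hpt, hx], ⟨δ, hδ, fun r hr => ⟨hg' r hr, ?_⟩⟩, ?_⟩
  · have := abs_lt.1 hr
    rw [hp r ⟨by linarith, by linarith⟩, hpt]
  · have hc : ContinuousAt (fun r => C.q (t - δ) + (r - (t - δ)) • v) t := by fun_prop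
    refine hc.congr ?_
    filter_upwards [Icc_mem_nhds (show t - δ < t by linarith) (show t < t + δ by linarith)]
      with r hr
    exact (hq r hr).symm

lemma countable_ev : (C.ev ∩ Ici 0).Countable := by
  have : C.ev ∩ Ici 0 ⊆ ⋃ k : ℕ, C.ev ∩ Icc 0 (k : ℝ) := by
    rintro t ⟨ht, ht0⟩
    obtain ⟨k, hk⟩ := exists_nat_ge t
    exact mem_iUnion.2 ⟨k, ht, ht0, hk⟩
  exact (countable_iUnion fun k => (C.ev_finite _).countable).mono this

/-- The curve started at the later time `c`. -/
def shift (c : ℝ) (hc : 0 ≤ c) : Curve N M where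
  q t := C.q (t + c)
  p t := C.p (t + c)
  ev := {t | t + c ∈ C.ev}
  q_periodic t ht := by rw [add_right_comm, C.q_periodic _ (by linarith)]
  p_periodic t ht := by rw [add_right_comm, C.p_periodic _ (by linarith)]
  ev_periodic t ht := by
    rw [mem_ofPred_eq, add_right_comm, C.ev_periodic _ (by linarith), mem_ofPred_eq]
  ev_pos := by
    obtain ⟨e, he, -, hec⟩ := C.exists_ev_gt c
    exact ⟨e - c, by simpa using he, by linarith⟩
  ev_finite b := by
    refine ((C.ev_finite (b + c)).preimage ((add_left_injective c).injOn)).subset ?_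
    rintro t ⟨ht, ht0, htb⟩
    exact ⟨ht, by linarith, by linarith⟩
  motion s t hs hst hev := by
    obtain ⟨x, v, hx, hv, hp, hq⟩ := C.motion (s + c) (t + c) (by linarith) (by linarith)
      (fun r hr h => hev (r - c) ⟨by linarith [hr.1], by linarith [hr.2]⟩ (by simpa using h))
    refine ⟨x, v, hx, hv, fun r hr => hp _ ⟨by linarith [hr.1], by linarith [hr.2]⟩,
      fun r hr => ?_⟩
    rw [hq (r + c) ⟨by linarith [hr.1], by linarith [hr.2]⟩, add_sub_add_right_eq_sub]
  reflects t hte ht := by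
    obtain ⟨x, y, h⟩ := C.reflects (t + c) hte (by linarith)
    obtain ⟨δ, hδ, hs⟩ := h.sides
    refine ⟨x, y, h.norm_eq, h.jump, ⟨δ, hδ, fun s hs0 hsδ => ?_⟩, h.inside⟩
    rw [sub_add_eq_add_sub, add_right_comm]
    exact hs s hs0 hsδ
  inside t ht hte := C.inside (t + c) (by linarith) hte

lemma exists_next (t : ℝ) (ht : 0 ≤ t) :
    ∃ e ∈ C.ev, t < e ∧ ∀ r ∈ Ioo t e, r ∉ C.ev := by
  obtain ⟨e, he, he0, hte⟩ := C.exists_ev_gt t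
  have hfin : (C.ev ∩ Ioc t e).Finite := (C.ev_finite e).subset
    (fun r hr => ⟨hr.1, ht.trans hr.2.1.le, hr.2.2⟩)
  obtain ⟨f, hf, hmin⟩ := hfin.exists_minimalFor id _ ⟨e, he, hte, le_rfl⟩
  refine ⟨f, hf.1, hf.2.1, fun r hr hre => ?_⟩
  have := hmin ⟨hre, hr.1, hr.2.le.trans hf.2.2⟩ hr.2.le
  exact absurd hr.2 (not_lt.2 this)

/-- An increasing enumeration of the reflection times from some positive time on. -/
lemma exists_enumeration : ∃ (e : ℕ → ℝ) (m : ℕ), 0 < m ∧ StrictMono e ∧ 0 < e 0 ∧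
    (∀ i, e i ∈ C.ev) ∧ (∀ i, ∀ r ∈ Ioo (e i) (e (i + 1)), r ∉ C.ev) ∧
    (∀ b, ∃ i, b < e i) ∧ ∀ i, e (i + m) = e i + 4 := by
  choose! next hmem hlt hnone using C.exists_next
  obtain ⟨a, ha, ha0⟩ := C.ev_pos
  have hpos : ∀ i, 0 < next^[i] a := by
    intro i
    induction i with
    | zero => exact ha0
    | succ i ih => rw [Function.iterate_succ_apply']; exact ih.trans (hlt _ ih.le)
  set e : ℕ → ℝ := fun i => next^[i] a with he
  have hsucc : ∀ i, e (i + 1) = next (e i) := fun i => Function.iterate_succ_apply' _ _ _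
  have hmono : StrictMono e := strictMono_nat_of_lt_succ fun i => by
    rw [hsucc]; exact hlt _ (hpos i).le
  have hev : ∀ i, e i ∈ C.ev := by
    intro i
    cases i with
    | zero => exact ha
    | succ i => rw [hsucc]; exact hmem _ (hpos i).le
  have hno : ∀ i, ∀ r ∈ Ioo (e i) (e (i + 1)), r ∉ C.ev := fun i r hr => by
    rw [hsucc] at hr; exact hnone _ (hpos i).le r hr
  have hub : ∀ b, ∃ i, b < e i := by
    intro b
    by_contra! hb
    exact (infinite_range_of_injective hmono.injective) ((C.ev_finite b).subset
      (range_subset_iff.2 fun i => ⟨hev i, (hpos i).le, hb i⟩))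
  have huniq : ∀ t s s', s ∈ C.ev → s' ∈ C.ev → t < s → t < s' →
      (∀ r ∈ Ioo t s, r ∉ C.ev) → (∀ r ∈ Ioo t s', r ∉ C.ev) → s = s' := by
    intro t s s' hs hs' hts hts' h h'
    rcases lt_trichotomy s s' with hlt | heq | hgt
    · exact absurd hs (h' s ⟨hts, hlt⟩)
    · exact heq
    · exact absurd hs' (h s' ⟨hts', hgt⟩)
  obtain ⟨m, hm1, hm2⟩ := exists_mem_Ico_of_unbounded hub
    (show e 0 ≤ e 0 + 4 by linarith)
  have hm : e m = e 0 + 4 := by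
    by_contra hne
    exact hno m (e 0 + 4) ⟨lt_of_le_of_ne hm1 hne, hm2⟩
      ((C.ev_periodic _ (hpos 0).le).2 (hev 0))
  refine ⟨e, m, ?_, hmono, hpos 0, hev, hno, hub, ?_⟩
  · rcases Nat.eq_zero_or_pos m with rfl | h
    · linarith
    · exact h
  · intro i
    induction i with
    | zero => rw [zero_add, hm]
    | succ i ih =>
      have h1 : i + 1 + m = i + m + 1 := by omega
      have hi1 := hmono (Nat.lt_succ_self i)
      rw [Nat.succ_eq_add_one] at hi1
      refine huniq (e i + 4) _ _ (hev _) ((C.ev_periodic _ (hpos _).le).2 (hev _)) ?_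
        (by linarith) ?_ ?_
      · rw [h1, ← ih]; exact hmono (Nat.lt_succ_self _)
      · rw [h1, ← ih]; exact hno _
      · intro r hr hre
        have hip : 0 < e i := hpos i
        refine hno i (r - 4) ⟨by linarith [hr.1], by linarith [hr.2]⟩ ?_
        rw [← C.ev_periodic _ (by linarith [hr.1]), sub_add_cancel]
        exact hre

/-- The discrete orbit traced by a curve, together with its reflection times. -/
lemma exists_orbit : ∃ (O : Orbit N M) (e : ℕ → ℝ), StrictMono e ∧ (∀ i, 0 < e i) ∧
    (∀ i, ∀ r ∈ Ioo (e i) (e (i + 1)), r ∉ C.ev) ∧ (∀ i, e i ∈ C.ev) ∧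
    (∀ b, ∃ i, b < e i) ∧
    (∀ i, O.q i = C.q (e (i + 1))) ∧ (∀ i, ∀ r ∈ Ioo (e i) (e (i + 1)), C.p r = O.p i) ∧
    ∀ i, ∀ θ ∈ Icc (0 : ℝ) 1,
      C.q ((1 - θ) * e (i + 1) + θ * e (i + 2)) = (1 - θ) • O.q i + θ • O.q (i + 1) := by
  obtain ⟨e, m, hm, hmono, he0, hev, hno, hub, hper⟩ := C.exists_enumeration
  have hpos : ∀ i, 0 < e i := fun i => he0.trans_le (hmono.monotone (Nat.zero_le i))
  have hlt : ∀ i, e i < e (i + 1) := fun i => hmono (Nat.lt_succ_self i)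
  choose x v hx hv hp hq using fun i => C.motion (e i) (e (i + 1)) (hpos i).le (hlt i) (hno i)
  have hxmid : ∀ i, x i = C.p ((e i + e (i + 1)) / 2) := fun i =>
    (hp i _ ⟨by linarith [hlt i], by linarith [hlt i]⟩).symm
  have hrefl : ∀ i, ReflectsAt N M C.q C.p (e (i + 1)) (x i) (x (i + 1)) := by
    intro i
    obtain ⟨y, z, h⟩ := C.reflects (e (i + 1)) (hev _) (hpos _)
    obtain ⟨δ, hδ, hs⟩ := h.sides
    have h1 := hlt i
    have h2 := hlt (i + 1)
    obtain ⟨s, hs0, hs1⟩ := exists_between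
      (show 0 < min δ (min (e (i + 1) - e i) (e (i + 1 + 1) - e (i + 1))) from
        lt_min hδ (lt_min (by linarith) (by linarith)))
    rw [lt_min_iff, lt_min_iff] at hs1
    obtain ⟨hy, hz⟩ := hs s hs0 hs1.1
    rw [hp i _ ⟨by linarith, by linarith⟩] at hy
    rw [hp (i + 1) _ ⟨by linarith, by linarith⟩] at hz
    rwa [hy, hz]
  choose u lam hlam hu hjump using fun i => (hrefl i).jump
  have hmot : ∀ i, C.q (e (i + 1 + 1)) =
      C.q (e (i + 1)) + (e (i + 1 + 1) - e (i + 1)) • v (i + 1) := fun i =>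
    hq (i + 1) _ ⟨(hlt (i + 1)).le, le_rfl⟩
  have hseg : ∀ i, ∀ θ ∈ Icc (0 : ℝ) 1, C.q ((1 - θ) * e (i + 1) + θ * e (i + 2)) =
      (1 - θ) • C.q (e (i + 1)) + θ • C.q (e (i + 1 + 1)) := by
    intro i θ hθ
    have h := hlt (i + 1)
    rw [hmot i, hq (i + 1) _ ⟨by nlinarith [hθ.1], by nlinarith [hθ.2]⟩, smul_add, ← add_assoc,
      ← add_smul, sub_add_cancel, one_smul, smul_smul]
    congr 2
    ring
  refine ⟨
    { m := m
      m_pos := hm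
      q := fun i => C.q (e (i + 1))
      p := x
      nq := u
      np := v
      lam := lam
      mu := fun i => e (i + 1 + 1) - e (i + 1)
      q_norm := fun i => (hrefl i).norm_eq
      p_norm := hx
      q_periodic := fun i => by
        rw [add_right_comm, hper, C.q_periodic _ (hpos _).le]
      p_periodic := fun i => by
        rw [hxmid, hxmid, add_right_comm, hper, hper,
          ← C.p_periodic ((e i + e (i + 1)) / 2) (by linarith [hpos i, hpos (i + 1)])]
        congr 1
        ring
      nq_spec := hu
      np_spec := hv
      lam_pos := hlam
      mu_pos := fun i => sub_pos.2 (hlt (i + 1))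
      reflection := hjump
      motion := hmot
      sum_mu := by
        rw [Finset.sum_range_sub (fun i => e (i + 1)), add_comm m 1, hper]
        ring
      q_inside := fun i θ hθ => by
        have h := hlt (i + 1)
        rw [← hseg i θ ⟨hθ.1.le, hθ.2.le⟩]
        refine C.inside _ ?_ (hno (i + 1) _ ⟨?_, ?_⟩)
        · nlinarith [hθ.1, hpos (i + 1)]
        · nlinarith [hθ.1]
        · nlinarith [hθ.2]
      p_inside := fun i => (hrefl i).inside },
    e, hmono, hpos, hno, hev, hub, fun i => rfl, hp, hseg⟩

lemma exists_orbit_of_notMem {t : ℝ} (ht : 0 < t) (hte : t ∉ C.ev) :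
    ∃ O : Orbit N M, ∃ i, ∃ θ ∈ Ioo (0 : ℝ) 1,
      (1 - θ) • O.q i + θ • O.q (i + 1) = C.q t ∧ O.p (i + 1) = C.p t := by
  obtain ⟨O, e, hmono, hpos, hno, hev, hub, hq, hp, hseg⟩ := C.exists_orbit
  obtain ⟨k, hk⟩ := exists_nat_gt (e 1)
  obtain ⟨hqk, hpk, hek⟩ := C.periodic_nat ht.le k
  rw [← hqk, ← hpk]
  rw [← hek] at hte
  have hlarge : e 1 ≤ t + 4 * k := by linarith [(k.cast_nonneg : (0 : ℝ) ≤ k)]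
  generalize t + 4 * (k : ℝ) = r at hte hlarge
  obtain ⟨j, hj1, hj2⟩ := exists_mem_Ico_of_unbounded hub
    ((hmono.monotone (Nat.zero_le 1)).trans hlarge)
  have hj0 : 1 ≤ j := by
    have := hmono.lt_iff_lt.1 (hlarge.trans_lt hj2)
    omega
  obtain ⟨i, rfl⟩ : ∃ i, j = i + 1 := ⟨j - 1, by omega⟩
  have hj3 : e (i + 1) < r := lt_of_le_of_ne hj1 fun h => hte (h ▸ hev _)
  have hd : 0 < e (i + 1 + 1) - e (i + 1) := by linarith
  have hθ : (r - e (i + 1)) / (e (i + 1 + 1) - e (i + 1)) ∈ Ioo (0 : ℝ) 1 :=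
    ⟨div_pos (by linarith) hd, (div_lt_one hd).2 (by linarith)⟩
  refine ⟨O, i, _, hθ, ?_, (hp (i + 1) r ⟨hj3, hj2⟩).symm⟩
  rw [← hseg i _ ⟨hθ.1.le, hθ.2.le⟩]
  congr 1
  field_simp
  ring

lemma exists_orbit_of_mem {t : ℝ} (ht : 0 < t) (hte : t ∈ C.ev) {x y : Fin n → ℝ}
    (h : ReflectsAt N M C.q C.p t x y) :
    ∃ O : Orbit N M, ∃ i, O.q i = C.q t ∧ O.p i = x ∧ O.p (i + 1) = y := by
  obtain ⟨O, e, hmono, hpos, hno, hev, hub, hq, hp, hseg⟩ := C.exists_orbit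
  obtain ⟨k, hk⟩ := exists_nat_gt (e 1)
  obtain ⟨hqk, -, hek⟩ := C.periodic_nat ht.le k
  have hlarge : e 1 ≤ t + 4 * k := by linarith [(k.cast_nonneg : (0 : ℝ) ≤ k)]
  obtain ⟨j, hj1, hj2⟩ := exists_mem_Ico_of_unbounded hub
    ((hmono.monotone (Nat.zero_le 1)).trans hlarge)
  have hj0 : 1 ≤ j := by
    have := hmono.lt_iff_lt.1 (hlarge.trans_lt hj2)
    omega
  obtain ⟨i, rfl⟩ : ∃ i, j = i + 1 := ⟨j - 1, by omega⟩
  have hj3 : e (i + 1) = t + 4 * k := by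
    by_contra hne
    exact hno (i + 1) _ ⟨lt_of_le_of_ne hj1 hne, hj2⟩ (hek.2 hte)
  obtain ⟨δ, hδ, hs⟩ := h.sides
  have h1 := hmono (Nat.lt_succ_self i)
  have h2 := hmono (Nat.lt_succ_self (i + 1))
  simp only [Nat.succ_eq_add_one] at h1 h2
  obtain ⟨s, hs0, hs1⟩ := exists_between
    (show 0 < min (min δ t) (min (e (i + 1) - e i) (e (i + 1 + 1) - e (i + 1))) from
      lt_min (lt_min hδ ht) (lt_min (by linarith) (by linarith)))
  rw [lt_min_iff, lt_min_iff, lt_min_iff] at hs1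
  obtain ⟨hx, hy⟩ := hs s hs0 hs1.1.1
  refine ⟨O, i, by rw [hq, hj3, hqk], ?_, ?_⟩
  · rw [← hp i (e (i + 1) - s) ⟨by linarith, by linarith⟩, ← hx,
      ← (C.periodic_nat (show 0 ≤ t - s by linarith) k).2.1, hj3]
    congr 1
    ring
  · rw [← hp (i + 1) (e (i + 1) + s) ⟨by linarith, by linarith⟩, ← hy,
      ← (C.periodic_nat (show 0 ≤ t + s by linarith) k).2.1, hj3]
    congr 1
    ring

end Curve

namespace Orbit

variable {n : ℕ} {N M : Seminorm ℝ (Fin n → ℝ)}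

/-- The time at which the `i`-th reflection of an orbit happens. -/
noncomputable def time (O : Orbit N M) (i : ℕ) : ℝ := ∑ j ∈ Finset.range i, O.mu j

variable (O : Orbit N M)

lemma time_zero : O.time 0 = 0 := Finset.sum_range_zero _

lemma time_succ (i : ℕ) : O.time (i + 1) = O.time i + O.mu i := Finset.sum_range_succ _ _

lemma time_strictMono : StrictMono O.time :=
  strictMono_nat_of_lt_succ fun i => by rw [time_succ]; linarith [O.mu_pos i]

lemma time_nonneg (i : ℕ) : 0 ≤ O.time i := by
  rw [← O.time_zero]; exact O.time_strictMono.monotone (Nat.zero_le i)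

lemma mu_eq (h : DualNorms N M) (i : ℕ) : O.mu i = N (O.q (i + 1) - O.q i) := by
  rw [O.motion, add_sub_cancel_left, map_smul_eq_mul, Real.norm_eq_abs,
    abs_of_pos (O.mu_pos i), (O.np_spec (i + 1)).norm_eq h.symm (O.p_norm _).le, mul_one]

lemma time_add_period (h : DualNorms N M) (i : ℕ) : O.time (i + O.m) = O.time i + 4 := by
  induction i with
  | zero => rw [zero_add, time_zero, zero_add]; exact O.sum_mu
  | succ i ih =>
    rw [add_right_comm, time_succ, ih, time_succ, mu_eq O h, mu_eq O h, add_right_comm i,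
      O.q_periodic, O.q_periodic]
    ring

lemma time_add_mul_period (h : DualNorms N M) (i k : ℕ) :
    O.time (i + k * O.m) = O.time i + 4 * k := by
  induction k with
  | zero => simp
  | succ k ih =>
    rw [Nat.succ_mul, ← add_assoc, time_add_period O h, ih]
    push_cast
    ring

lemma time_unbounded (h : DualNorms N M) (b : ℝ) : ∃ i, b < O.time i := by
  obtain ⟨k, hk⟩ := exists_nat_gt b
  refine ⟨0 + k * O.m, ?_⟩
  rw [time_add_mul_period O h, time_zero]
  linarith [(k.cast_nonneg : (0 : ℝ) ≤ k)]

/-- An orbit parametrized by time. -/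
lemma exists_curve (h : DualNorms N M) : ∃ C : Curve N M, C.ev = range O.time ∧
    (∀ i, ∀ θ ∈ Ico (0 : ℝ) 1, C.q ((1 - θ) * O.time i + θ * O.time (i + 1)) =
      (1 - θ) • O.q i + θ • O.q (i + 1) ∧
      C.p ((1 - θ) * O.time i + θ * O.time (i + 1)) = O.p (i + 1)) ∧
    ∀ i, ReflectsAt N M C.q C.p (O.time (i + 1)) (O.p (i + 1)) (O.p (i + 2)) := by
  have hmono := O.time_strictMono
  have hub := O.time_unbounded h
  have hex : ∀ t, ∃ i, 0 ≤ t → O.time i ≤ t ∧ t < O.time (i + 1) := by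
    intro t
    by_cases ht : 0 ≤ t
    · obtain ⟨i, hi⟩ := exists_mem_Ico_of_unbounded hub (O.time_zero.le.trans ht)
      exact ⟨i, fun _ => hi⟩
    · exact ⟨0, fun h => absurd h ht⟩
  choose idx hidx using hex
  have hidx_eq : ∀ {t i}, O.time i ≤ t → t < O.time (i + 1) → idx t = i := fun {t i} h1 h2 =>
    eq_of_mem_Ico_of_strictMono hmono (hidx t ((O.time_nonneg i).trans h1)) ⟨h1, h2⟩
  set q : ℝ → Fin n → ℝ := fun t => O.q (idx t) + (t - O.time (idx t)) • O.np (idx t + 1)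
    with hq
  set p : ℝ → Fin n → ℝ := fun t => O.p (idx t + 1) with hp
  have hq_eq : ∀ {t i}, O.time i ≤ t → t ≤ O.time (i + 1) →
      q t = O.q i + (t - O.time i) • O.np (i + 1) := by
    intro t i h1 h2
    rcases h2.lt_or_eq with h2 | rfl
    · simp only [hq, hidx_eq h1 h2]
    · simp only [hq, hidx_eq le_rfl (hmono (Nat.lt_succ_self (i + 1)))]
      rw [sub_self, zero_smul, add_zero, O.motion, time_succ, add_sub_cancel_left]
  have hp_eq : ∀ {t i}, O.time i ≤ t → t < O.time (i + 1) → p t = O.p (i + 1) := by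
    intro t i h1 h2
    simp only [hp, hidx_eq h1 h2]
  have hseg : ∀ i, ∀ θ ∈ Ico (0 : ℝ) 1, q ((1 - θ) * O.time i + θ * O.time (i + 1)) =
      (1 - θ) • O.q i + θ • O.q (i + 1) ∧
      p ((1 - θ) * O.time i + θ * O.time (i + 1)) = O.p (i + 1) := by
    intro i θ hθ
    have hlt := hmono (Nat.lt_succ_self i)
    rw [Nat.succ_eq_add_one] at hlt
    have h1 : O.time i ≤ (1 - θ) * O.time i + θ * O.time (i + 1) := by nlinarith [hθ.1]
    have h2 : (1 - θ) * O.time i + θ * O.time (i + 1) < O.time (i + 1) := by nlinarith [hθ.2]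
    refine ⟨?_, hp_eq h1 h2⟩
    rw [hq_eq h1 h2.le, O.motion, time_succ, smul_add, ← add_assoc, ← add_smul, sub_add_cancel,
      one_smul, smul_smul]
    congr 2
    ring
  have hidx_per : ∀ {t}, 0 ≤ t → idx (t + 4) = idx t + O.m := by
    intro t ht
    obtain ⟨h1, h2⟩ := hidx t ht
    apply hidx_eq
    · rw [time_add_period O h]; linarith
    · rw [add_right_comm, time_add_period O h]; linarith
  have hrefl : ∀ i, ReflectsAt N M q p (O.time (i + 1)) (O.p (i + 1)) (O.p (i + 2)) := by
    intro i
    have hqt : q (O.time (i + 1)) = O.q (i + 1) := by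
      rw [hq_eq le_rfl (hmono (Nat.lt_succ_self (i + 1))).le, sub_self, zero_smul, add_zero]
    refine ⟨by rw [hqt, O.q_norm],
      ⟨O.nq (i + 1), O.lam (i + 1), O.lam_pos _, by rw [hqt]; exact O.nq_spec _,
        O.reflection _⟩,
      ⟨min (O.mu i) (O.mu (i + 1)), lt_min (O.mu_pos _) (O.mu_pos _), fun s hs0 hs => ?_⟩,
      O.p_inside (i + 1)⟩
    rw [lt_min_iff] at hs
    constructor
    · apply hp_eq
      · rw [time_succ]; linarith
      · linarith
    · apply hp_eq
      · linarith
      · rw [O.time_succ (i + 1)]; linarith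
  refine ⟨
    { q := q
      p := p
      ev := range O.time
      q_periodic := fun t ht => by
        have hnp : O.np (idx t + 1 + O.m) = O.np (idx t + 1) := by
          apply (O.np_spec (idx t + 1)).2.2 _ (O.np_spec _).1
          rw [← O.p_periodic]
          exact (O.np_spec _).2.1
        simp only [hq, hidx_per ht]
        rw [O.q_periodic, time_add_period O h, add_right_comm (idx t), hnp,
          add_sub_add_right_eq_sub]
      p_periodic := fun t ht => by
        simp only [hp, hidx_per ht]
        rw [add_right_comm, O.p_periodic]
      ev_periodic := fun t ht => by
        constructor
        · rintro ⟨i, hi⟩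
          refine ⟨idx t, le_antisymm (hidx t ht).1 ?_⟩
          have h1 : idx (t + 4) = i := hidx_eq hi.le (hi ▸ hmono (Nat.lt_succ_self i))
          rw [hidx_per ht] at h1
          rw [← h1, time_add_period O h] at hi
          linarith
        · rintro ⟨i, rfl⟩
          exact ⟨i + O.m, time_add_period O h i⟩
      ev_pos := ⟨O.time 1, ⟨1, rfl⟩, by
        rw [← O.time_zero]; exact hmono Nat.zero_lt_one⟩
      ev_finite := fun b => by
        obtain ⟨k, hk⟩ := hub b
        refine ((Set.finite_Iio k).image O.time).subset ?_
        rintro _ ⟨⟨i, rfl⟩, -, hi⟩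
        exact ⟨i, hmono.lt_iff_lt.1 (hi.trans_lt hk), rfl⟩
      motion := fun s t hs hst hno => by
        obtain ⟨h1, h2⟩ := hidx s hs
        have ht : t ≤ O.time (idx s + 1) := by
          by_contra! hlt
          exact hno _ ⟨h2, hlt⟩ ⟨_, rfl⟩
        refine ⟨O.p (idx s + 1), O.np (idx s + 1), O.p_norm _, O.np_spec _,
          fun r hr => hp_eq (h1.trans hr.1.le) (hr.2.trans_le ht), fun r hr => ?_⟩
        rw [hq_eq (h1.trans hr.1) (hr.2.trans ht), hq_eq h1 h2.le, add_assoc, ← add_smul]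
        congr 2
        ring
      reflects := by
        rintro _ ⟨i, rfl⟩ hi
        cases i with
        | zero => exact absurd O.time_zero hi.ne'
        | succ i => exact ⟨_, _, hrefl i⟩
      inside := fun t ht hte => by
        obtain ⟨h1, h2⟩ := hidx t ht.le
        have h3 : O.time (idx t) < t := lt_of_le_of_ne h1 fun h => hte ⟨_, h⟩
        have hd : 0 < O.time (idx t + 1) - O.time (idx t) := by linarith
        have hθ : (t - O.time (idx t)) / (O.time (idx t + 1) - O.time (idx t)) ∈
            Ioo (0 : ℝ) 1 := ⟨div_pos (by linarith) hd, (div_lt_one hd).2 (by linarith)⟩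
        have h4 := O.q_inside (idx t) _ hθ
        rw [← (hseg (idx t) _ ⟨hθ.1.le, hθ.2⟩).1] at h4
        convert h4 using 3
        field_simp
        ring },
    rfl, hseg, hrefl⟩

lemma exists_curve_motion (h : DualNorms N M) (i : ℕ) {θ : ℝ} (hθ : θ ∈ Ioo (0 : ℝ) 1) :
    ∃ C : Curve N M, ∃ t, 0 < t ∧ t ∉ C.ev ∧
      C.q t = (1 - θ) • O.q i + θ • O.q (i + 1) ∧ C.p t = O.p (i + 1) := by
  obtain ⟨C, hev, hseg, -⟩ := O.exists_curve h
  have hlt := O.time_strictMono (Nat.lt_succ_self i)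
  rw [Nat.succ_eq_add_one] at hlt
  have h1 : O.time i < (1 - θ) * O.time i + θ * O.time (i + 1) := by nlinarith [hθ.1]
  have h2 : (1 - θ) * O.time i + θ * O.time (i + 1) < O.time (i + 1) := by nlinarith [hθ.2]
  refine ⟨C, _, (O.time_nonneg i).trans_lt h1, ?_, hseg i θ ⟨hθ.1.le, hθ.2⟩⟩
  rw [hev]
  rintro ⟨j, hj⟩
  rw [← hj] at h1 h2
  have h3 := O.time_strictMono.lt_iff_lt.1 h1
  have h4 := O.time_strictMono.lt_iff_lt.1 h2
  omega

lemma exists_curve_reflection (h : DualNorms N M) (i : ℕ) :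
    ∃ C : Curve N M, ∃ t, 0 < t ∧ t ∈ C.ev ∧ C.q t = O.q i ∧
      ReflectsAt N M C.q C.p t (O.p i) (O.p (i + 1)) := by
  obtain ⟨C, hev, hseg, hrefl⟩ := O.exists_curve h
  obtain ⟨j, hj⟩ : ∃ j, j + 1 = i + O.m := ⟨i + O.m - 1, by have := O.m_pos; omega⟩
  refine ⟨C, O.time (j + 1), ?_, by rw [hev]; exact ⟨_, rfl⟩, ?_, ?_⟩
  · rw [← O.time_zero]; exact O.time_strictMono (Nat.succ_pos j)
  · have := (hseg (j + 1) 0 ⟨le_rfl, zero_lt_one⟩).1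
    rw [sub_zero, one_mul, zero_mul, add_zero, one_smul, zero_smul, add_zero] at this
    rw [this, hj, O.q_periodic]
  · have := hrefl j
    have h2 : O.p (j + 2) = O.p (i + 1) := by
      rw [show j + 2 = i + 1 + O.m by omega, O.p_periodic]
    rwa [h2, show O.p (j + 1) = O.p i by rw [hj, O.p_periodic]] at this

end Orbit

/-- `ℝⁿ` with the dual norms `N`, `M` is the direct sum of the images of `J₁` and `J₂`;
`N` is the maximum and `M` the sum of the corresponding norms on the summands. -/
structure IsSum {k l n : ℕ} (N₁ M₁ : Seminorm ℝ (Fin k → ℝ)) (N₂ M₂ : Seminorm ℝ (Fin l → ℝ))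
    (N M : Seminorm ℝ (Fin n → ℝ)) (J₁ : (Fin k → ℝ) →ₗ[ℝ] (Fin n → ℝ))
    (J₂ : (Fin l → ℝ) →ₗ[ℝ] (Fin n → ℝ)) : Prop where
  pairing_eq : ∀ x y a b, pairing (J₁ x + J₂ y) (J₁ a + J₂ b) = pairing x a + pairing y b
  exists_eq : ∀ z, ∃ a b, z = J₁ a + J₂ b
  norm_max : ∀ a b, N (J₁ a + J₂ b) = max (N₁ a) (N₂ b)
  norm_add : ∀ x y, M (J₁ x + J₂ y) = M₁ x + M₂ y

lemma real_smul_norm {n : ℕ} (M : Seminorm ℝ (Fin n → ℝ)) {s : ℝ} (hs : 0 ≤ s)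
    (x : Fin n → ℝ) : M (s • x) = s * M x := by
  rw [map_smul_eq_mul, Real.norm_eq_abs, abs_of_nonneg hs]

namespace IsSum

variable {k l n : ℕ} {N₁ M₁ : Seminorm ℝ (Fin k → ℝ)} {N₂ M₂ : Seminorm ℝ (Fin l → ℝ)}
  {N M : Seminorm ℝ (Fin n → ℝ)} {J₁ : (Fin k → ℝ) →ₗ[ℝ] (Fin n → ℝ)}
  {J₂ : (Fin l → ℝ) →ₗ[ℝ] (Fin n → ℝ)}

lemma symm (S : IsSum N₁ M₁ N₂ M₂ N M J₁ J₂) : IsSum N₂ M₂ N₁ M₁ N M J₂ J₁ where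
  pairing_eq x y a b := by
    rw [add_comm (J₂ x), add_comm (J₂ a), S.pairing_eq, add_comm]
  exists_eq z := by
    obtain ⟨a, b, h⟩ := S.exists_eq z
    exact ⟨b, a, by rw [h, add_comm]⟩
  norm_max a b := by rw [add_comm, S.norm_max, max_comm]
  norm_add a b := by rw [add_comm, S.norm_add, add_comm]

lemma dualNorms (S : IsSum N₁ M₁ N₂ M₂ N M J₁ J₂) (h₁ : DualNorms N₁ M₁)
    (h₂ : DualNorms N₂ M₂) (hN : Continuous N) (hM : Continuous M) : DualNorms N M where
  cont_left := hN
  cont_right := hM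
  pairing_le p q := by
    obtain ⟨x, y, rfl⟩ := S.exists_eq p
    obtain ⟨a, b, rfl⟩ := S.exists_eq q
    rw [S.pairing_eq, S.norm_max, S.norm_add]
    have h3 := h₁.pairing_le x a
    have h4 := h₂.pairing_le y b
    have h5 := mul_le_mul_of_nonneg_left (le_max_left (N₁ a) (N₂ b)) (apply_nonneg M₁ x)
    have h6 := mul_le_mul_of_nonneg_left (le_max_right (N₁ a) (N₂ b)) (apply_nonneg M₂ y)
    linarith
  norming_left q := by
    obtain ⟨a, b, rfl⟩ := S.exists_eq q
    rw [S.norm_max]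
    rcases le_total (N₁ a) (N₂ b) with h | h
    · obtain ⟨y, hy, hyb⟩ := h₂.norming_left b
      refine ⟨J₁ 0 + J₂ y, ?_, ?_⟩
      · rw [S.norm_add, map_zero, zero_add]; exact hy
      · rw [S.pairing_eq, pairing_zero_left, zero_add, hyb, max_eq_right h]
    · obtain ⟨x, hx, hxa⟩ := h₁.norming_left a
      refine ⟨J₁ x + J₂ 0, ?_, ?_⟩
      · rw [S.norm_add, map_zero, add_zero]; exact hx
      · rw [S.pairing_eq, pairing_zero_left, add_zero, hxa, max_eq_left h]
  norming_right p := by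
    obtain ⟨x, y, rfl⟩ := S.exists_eq p
    obtain ⟨a, ha, hxa⟩ := h₁.norming_right x
    obtain ⟨b, hb, hyb⟩ := h₂.norming_right y
    refine ⟨J₁ a + J₂ b, ?_, ?_⟩
    · rw [S.norm_max]; exact max_le ha hb
    · rw [S.pairing_eq, S.norm_add, hxa, hyb]
  exists_unit_left := by
    obtain ⟨a, ha⟩ := h₁.exists_unit_left
    exact ⟨J₁ a + J₂ 0, by rw [S.norm_max, map_zero, ha, max_eq_left zero_le_one]⟩
  exists_unit_right := by
    obtain ⟨x, hx⟩ := h₁.exists_unit_right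
    exact ⟨J₁ x + J₂ 0, by rw [S.norm_add, map_zero, hx, add_zero]⟩

lemma norm_smul_add_smul
    (S : IsSum N₁ M₁ N₂ M₂ N M J₁ J₂)
    {s : ℝ} (hs : s ∈ Ioo (0 : ℝ) 1) (x : Fin k → ℝ) (y : Fin l → ℝ) :
    M (J₁ (s • x) + J₂ ((1 - s) • y)) = s * M₁ x + (1 - s) * M₂ y := by
  rw [S.norm_add, real_smul_norm _ hs.1.le, real_smul_norm _ (by linarith [hs.2])]

lemma uniqueNormal_momentum
    (S : IsSum N₁ M₁ N₂ M₂ N M J₁ J₂) (h₁ : DualNorms N₁ M₁) (h₂ : DualNorms N₂ M₂) {s : ℝ}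
    (hs : s ∈ Ioo (0 : ℝ) 1) {x v : Fin k → ℝ} {y w : Fin l → ℝ} (hx : M₁ x = 1)
    (hy : M₂ y = 1) (hv : UniqueNormal N₁ x v) (hw : UniqueNormal N₂ y w) :
    UniqueNormal N (J₁ (s • x) + J₂ ((1 - s) • y)) (J₁ v + J₂ w) := by
  refine ⟨?_, ?_, fun z hz hzp => ?_⟩
  · rw [S.norm_max]; exact max_le hv.1 hw.1
  · rw [S.pairing_eq, pairing_smul_right, pairing_smul_right, hv.2.1, hw.2.1]; ring
  · obtain ⟨a, b, rfl⟩ := S.exists_eq z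
    rw [S.norm_max, max_le_iff] at hz
    rw [S.pairing_eq, pairing_smul_right, pairing_smul_right] at hzp
    have h3 := h₁.symm.pairing_le a x
    have h4 := h₂.symm.pairing_le b y
    rw [hx, mul_one] at h3
    rw [hy, mul_one] at h4
    have h5 : pairing a x = 1 := by nlinarith [hs.1, hs.2, hz.1, hz.2]
    have h6 : pairing b y = 1 := by nlinarith [hs.1, hs.2, hz.1, hz.2]
    rw [hv.2.2 a hz.1 h5, hw.2.2 b hz.2 h6]

lemma uniqueNormal_coordinate
    (S : IsSum N₁ M₁ N₂ M₂ N M J₁ J₂) (h₁ : DualNorms N₁ M₁) (h₂ : DualNorms N₂ M₂)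
    {a u : Fin k → ℝ} {b : Fin l → ℝ} (ha : N₁ a = 1) (hb : N₂ b < 1)
    (hu : UniqueNormal M₁ a u) : UniqueNormal M (J₁ a + J₂ b) (J₁ u) := by
  have hJ : J₁ u = J₁ u + J₂ 0 := by rw [map_zero, add_zero]
  rw [hJ]
  refine ⟨?_, ?_, fun z hz hzp => ?_⟩
  · rw [S.norm_add, map_zero, add_zero]; exact hu.1
  · rw [S.pairing_eq, pairing_zero_left, add_zero, hu.2.1]
  · obtain ⟨x, y, rfl⟩ := S.exists_eq z
    rw [S.norm_add] at hz
    rw [S.pairing_eq] at hzp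
    have h3 := h₁.pairing_le x a
    have h4 := h₂.pairing_le y b
    rw [ha, mul_one] at h3
    have hy0 : M₂ y = 0 := by
      nlinarith [apply_nonneg M₂ y, mul_nonneg (apply_nonneg M₂ y) (sub_nonneg.2 hb.le)]
    have hy : y = 0 := h₂.symm.eq_zero hy0
    subst hy
    rw [pairing_zero_left, add_zero] at hzp
    rw [map_zero, add_zero] at hz
    rw [hu.2.2 x hz hzp]

lemma reflectsAt
    (S : IsSum N₁ M₁ N₂ M₂ N M J₁ J₂) (h₁ : DualNorms N₁ M₁) (h₂ : DualNorms N₂ M₂) {s : ℝ}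
    (hs : s ∈ Ioo (0 : ℝ) 1) {q₁ p₁ : ℝ → Fin k → ℝ} {q₂ p₂ : ℝ → Fin l → ℝ} {t : ℝ}
    {x y : Fin k → ℝ} (h : ReflectsAt N₁ M₁ q₁ p₁ t x y) (hq : N₂ (q₂ t) < 1)
    (hp : M₂ (p₂ t) = 1) (hstill : ∃ δ > 0, ∀ r, |r - t| < δ → p₂ r = p₂ t) :
    ReflectsAt N M (fun t => J₁ (q₁ t) + J₂ (q₂ t))
      (fun t => J₁ (s • p₁ t) + J₂ ((1 - s) • p₂ t)) t
      (J₁ (s • x) + J₂ ((1 - s) • p₂ t)) (J₁ (s • y) + J₂ ((1 - s) • p₂ t)) where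
  norm_eq := by rw [S.norm_max, h.norm_eq, max_eq_left hq.le]
  jump := by
    obtain ⟨u, lam, hlam, hu, rfl⟩ := h.jump
    refine ⟨J₁ u, s * lam, mul_pos hs.1 hlam,
      S.uniqueNormal_coordinate h₁ h₂ h.norm_eq hq hu, ?_⟩
    simp only [map_smul, map_sub, smul_sub, smul_smul]
    abel
  sides := by
    obtain ⟨δ, hδ, hsides⟩ := h.sides
    obtain ⟨η, hη, hstill⟩ := hstill
    refine ⟨min δ η, lt_min hδ hη, fun r hr0 hr => ?_⟩
    rw [lt_min_iff] at hr
    obtain ⟨hx, hy⟩ := hsides r hr0 hr.1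
    simp only [hx, hy]
    rw [hstill (t - r) (by rw [sub_sub_cancel_left, abs_neg, abs_of_pos hr0]; exact hr.2),
      hstill (t + r) (by rw [add_sub_cancel_left, abs_of_pos hr0]; exact hr.2)]
    exact ⟨rfl, rfl⟩
  inside θ hθ := by
    have hcomb : (1 - θ) • (J₁ (s • x) + J₂ ((1 - s) • p₂ t)) +
        θ • (J₁ (s • y) + J₂ ((1 - s) • p₂ t)) =
        J₁ (s • ((1 - θ) • x + θ • y)) + J₂ ((1 - s) • p₂ t) := by
      simp only [map_smul, map_add]
      module
    rw [hcomb, S.norm_smul_add_smul hs, hp]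
    nlinarith [h.inside θ hθ, hs.1]

/-- Two curves without common reflection times run simultaneously. -/
lemma exists_curve
    (S : IsSum N₁ M₁ N₂ M₂ N M J₁ J₂) (h₁ : DualNorms N₁ M₁) (h₂ : DualNorms N₂ M₂) {s : ℝ}
    (hs : s ∈ Ioo (0 : ℝ) 1) (C₁ : Curve N₁ M₁) (C₂ : Curve N₂ M₂)
    (hdisj : ∀ t, 0 ≤ t → t ∈ C₁.ev → t ∉ C₂.ev) :
    ∃ C : Curve N M, C.ev = C₁.ev ∪ C₂.ev ∧ (C.q = fun t => J₁ (C₁.q t) + J₂ (C₂.q t)) ∧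
      (C.p = fun t => J₁ (s • C₁.p t) + J₂ ((1 - s) • C₂.p t)) ∧
      ∀ t x y, 0 < t → t ∈ C₁.ev → ReflectsAt N₁ M₁ C₁.q C₁.p t x y →
        ReflectsAt N M C.q C.p t (J₁ (s • x) + J₂ ((1 - s) • C₂.p t))
          (J₁ (s • y) + J₂ ((1 - s) • C₂.p t)) := by
  have hfirst : ∀ t x y, 0 < t → t ∈ C₁.ev → ReflectsAt N₁ M₁ C₁.q C₁.p t x y →
      ReflectsAt N M (fun t => J₁ (C₁.q t) + J₂ (C₂.q t))
        (fun t => J₁ (s • C₁.p t) + J₂ ((1 - s) • C₂.p t)) t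
        (J₁ (s • x) + J₂ ((1 - s) • C₂.p t)) (J₁ (s • y) + J₂ ((1 - s) • C₂.p t)) := by
    intro t x y ht hte h
    have hte₂ := hdisj t ht.le hte
    obtain ⟨hp, ⟨δ, hδ, hstill⟩, -⟩ := C₂.exists_still ht hte₂
    exact S.reflectsAt h₁ h₂ hs h (C₂.inside t ht hte₂) hp
      ⟨δ, hδ, fun r hr => (hstill r hr).2⟩
  refine ⟨
    { q := fun t => J₁ (C₁.q t) + J₂ (C₂.q t)
      p := fun t => J₁ (s • C₁.p t) + J₂ ((1 - s) • C₂.p t)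
      ev := C₁.ev ∪ C₂.ev
      q_periodic := fun t ht => by rw [C₁.q_periodic t ht, C₂.q_periodic t ht]
      p_periodic := fun t ht => by rw [C₁.p_periodic t ht, C₂.p_periodic t ht]
      ev_periodic := fun t ht => by
        rw [mem_union, mem_union, C₁.ev_periodic t ht, C₂.ev_periodic t ht]
      ev_pos := by
        obtain ⟨e, he, he0⟩ := C₁.ev_pos
        exact ⟨e, Or.inl he, he0⟩
      ev_finite := fun b => by
        rw [union_inter_distrib_right]
        exact (C₁.ev_finite b).union (C₂.ev_finite b)
      motion := fun a b ha hab hno => by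
        obtain ⟨x, v, hx, hv, hp, hq⟩ :=
          C₁.motion a b ha hab fun r hr h => hno r hr (Or.inl h)
        obtain ⟨y, w, hy, hw, hp', hq'⟩ :=
          C₂.motion a b ha hab fun r hr h => hno r hr (Or.inr h)
        refine ⟨J₁ (s • x) + J₂ ((1 - s) • y), J₁ v + J₂ w, ?_,
          S.uniqueNormal_momentum h₁ h₂ hs hx hy hv hw,
          fun r hr => by rw [hp r hr, hp' r hr], fun r hr => ?_⟩
        · rw [S.norm_smul_add_smul hs, hx, hy]; ring
        · rw [hq r hr, hq' r hr]
          simp only [map_add, map_smul, smul_add]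
          abel
      reflects := fun t hte ht => by
        by_cases hte₁ : t ∈ C₁.ev
        · obtain ⟨x, y, h⟩ := C₁.reflects t hte₁ ht
          exact ⟨_, _, hfirst t x y ht hte₁ h⟩
        · obtain ⟨x, y, h⟩ := C₂.reflects t (hte.resolve_left hte₁) ht
          obtain ⟨hp, ⟨δ, hδ, hstill⟩, -⟩ := C₁.exists_still ht hte₁
          have := S.symm.reflectsAt h₂ h₁ (s := 1 - s) ⟨by linarith [hs.2], by linarith [hs.1]⟩
            h (C₁.inside t ht hte₁) hp ⟨δ, hδ, fun r hr => (hstill r hr).2⟩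
          simp only [sub_sub_cancel, add_comm (J₂ _)] at this
          exact ⟨_, _, this⟩
      inside := fun t ht hte => by
        rw [mem_union, not_or] at hte
        rw [S.norm_max]
        exact max_lt (C₁.inside t ht hte.1) (C₂.inside t ht hte.2) },
    rfl, rfl, rfl, hfirst⟩

lemma exists_small_shift (C₁ : Curve N₁ M₁) (C₂ : Curve N₂ M₂) {t₁ t₂ : ℝ} (ht₁ : 0 ≤ t₁)
    (ht₂ : 0 ≤ t₂) {η : ℝ} (hη : 0 < η) :
    ∃ δ, 0 < δ ∧ δ < η ∧ ∀ t, 0 ≤ t → t + t₁ ∈ C₁.ev → t + (t₂ + δ) ∉ C₂.ev := by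
  have hc : (image2 (fun e₁ e₂ => e₂ - t₂ - (e₁ - t₁)) (C₁.ev ∩ Ici 0)
      (C₂.ev ∩ Ici 0)).Countable := C₁.countable_ev.image2 C₂.countable_ev _
  obtain ⟨δ, hδ, hδ0, hδη⟩ := (hc.dense_compl ℝ).exists_between hη
  refine ⟨δ, hδ0, hδη, fun t ht h1 h2 => hδ ?_⟩
  refine ⟨t + t₁, ⟨h1, by simp only [mem_Ici]; linarith⟩, t + (t₂ + δ),
    ⟨h2, by simp only [mem_Ici]; linarith⟩, by ring⟩

/-- Two curves can be run simultaneously so that at time `4` the first one is in its state at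
time `t₁` and the second one is arbitrarily close to its state at time `t₂`. -/
lemma exists_curve_near
    (S : IsSum N₁ M₁ N₂ M₂ N M J₁ J₂) (h₁ : DualNorms N₁ M₁) (h₂ : DualNorms N₂ M₂) {s : ℝ}
    (hs : s ∈ Ioo (0 : ℝ) 1) (C₁ : Curve N₁ M₁) (C₂ : Curve N₂ M₂) {t₁ t₂ : ℝ} (ht₁ : 0 < t₁)
    (ht₂ : 0 < t₂) (hte₂ : t₂ ∉ C₂.ev) {ε : ℝ} (hε : 0 < ε) :
    ∃ C : Curve N M, ∃ b, dist b (C₂.q t₂) < ε ∧ C.q 4 = J₁ (C₁.q t₁) + J₂ b ∧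
      C.p 4 = J₁ (s • C₁.p t₁) + J₂ ((1 - s) • C₂.p t₂) ∧ (4 ∈ C.ev ↔ t₁ ∈ C₁.ev) ∧
      (t₁ ∈ C₁.ev → ∀ x y, ReflectsAt N₁ M₁ C₁.q C₁.p t₁ x y →
        ReflectsAt N M C.q C.p 4 (J₁ (s • x) + J₂ ((1 - s) • C₂.p t₂))
          (J₁ (s • y) + J₂ ((1 - s) • C₂.p t₂))) := by
  obtain ⟨-, ⟨η, hη, hstill⟩, hcont⟩ := C₂.exists_still ht₂ hte₂
  obtain ⟨η', hη', hclose⟩ := Metric.continuousAt_iff.1 hcont ε hε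
  obtain ⟨δ, hδ0, hδ, hdisj⟩ := exists_small_shift C₁ C₂ ht₁.le ht₂.le (lt_min hη hη')
  rw [lt_min_iff] at hδ
  have habs : |t₂ + δ - t₂| = δ := by rw [add_sub_cancel_left, abs_of_pos hδ0]
  obtain ⟨hδe, hδp⟩ := hstill (t₂ + δ) (by rw [habs]; exact hδ.1)
  have hδq := hclose (x := t₂ + δ) (by rw [Real.dist_eq, habs]; exact hδ.2)
  have hδt : 0 ≤ t₂ + δ := by linarith
  obtain ⟨C, hCev, hCq, hCp, hCr⟩ := S.exists_curve h₁ h₂ hs (C₁.shift t₁ ht₁.le)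
    (C₂.shift (t₂ + δ) hδt) hdisj
  have hq₁ : (C₁.shift t₁ ht₁.le).q 4 = C₁.q t₁ := by
    change C₁.q (4 + t₁) = _
    rw [add_comm, C₁.q_periodic _ ht₁.le]
  have hp₁ : (C₁.shift t₁ ht₁.le).p 4 = C₁.p t₁ := by
    change C₁.p (4 + t₁) = _
    rw [add_comm, C₁.p_periodic _ ht₁.le]
  have he₁ : 4 ∈ (C₁.shift t₁ ht₁.le).ev ↔ t₁ ∈ C₁.ev := by
    change 4 + t₁ ∈ C₁.ev ↔ _
    rw [add_comm, C₁.ev_periodic _ ht₁.le]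
  have hq₂ : (C₂.shift (t₂ + δ) hδt).q 4 = C₂.q (t₂ + δ) := by
    change C₂.q (4 + (t₂ + δ)) = _
    rw [add_comm, C₂.q_periodic _ hδt]
  have hp₂ : (C₂.shift (t₂ + δ) hδt).p 4 = C₂.p t₂ := by
    change C₂.p (4 + (t₂ + δ)) = _
    rw [add_comm, C₂.p_periodic _ hδt, hδp]
  have he₂ : 4 ∉ (C₂.shift (t₂ + δ) hδt).ev := by
    change 4 + (t₂ + δ) ∉ C₂.ev
    rwa [add_comm, C₂.ev_periodic _ hδt]
  refine ⟨C, C₂.q (t₂ + δ), hδq, ?_, ?_, ?_, fun hte x y hxy => ?_⟩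
  · rw [hCq]; simp only [hq₁, hq₂]
  · rw [hCp]; simp only [hp₁, hp₂]
  · rw [hCev, mem_union, he₁, or_iff_left he₂]
  · obtain ⟨δ', hδ', hsides⟩ := hxy.sides
    have hshift : ReflectsAt N₁ M₁ (C₁.shift t₁ ht₁.le).q (C₁.shift t₁ ht₁.le).p 4 x y := by
      refine ⟨by rw [hq₁]; exact hxy.norm_eq, by rw [hq₁]; exact hxy.jump,
        ⟨min δ' t₁, lt_min hδ' ht₁, fun r hr0 hr => ?_⟩, hxy.inside⟩
      rw [lt_min_iff] at hr
      change C₁.p (4 - r + t₁) = x ∧ C₁.p (4 + r + t₁) = y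
      rw [show 4 - r + t₁ = t₁ - r + 4 by ring, show 4 + r + t₁ = t₁ + r + 4 by ring,
        C₁.p_periodic _ (by linarith), C₁.p_periodic _ (by linarith)]
      exact hsides r hr0 hr.1
    have := hCr 4 x y (by norm_num) (he₁.2 hte) hshift
    rwa [hp₂] at this

lemma exists_dist_add_lt (J₁ : (Fin k → ℝ) →ₗ[ℝ] (Fin n → ℝ))
    (J₂ : (Fin l → ℝ) →ₗ[ℝ] (Fin n → ℝ)) (a : Fin k → ℝ) (b : Fin l → ℝ) {ε : ℝ} (hε : 0 < ε) :
    ∃ η > 0, ∀ a' b', dist a' a < η → dist b' b < η →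
      dist (J₁ a' + J₂ b') (J₁ a + J₂ b) < ε := by
  have hJ₁ := J₁.continuous_of_finiteDimensional
  have hJ₂ := J₂.continuous_of_finiteDimensional
  have hc : Continuous fun z : (Fin k → ℝ) × (Fin l → ℝ) => J₁ z.1 + J₂ z.2 := by fun_prop
  obtain ⟨η, hη, h⟩ := Metric.continuousAt_iff.1 (hc.continuousAt (x := (a, b))) ε hε
  exact ⟨η, hη, fun a' b' ha hb => h (x := (a', b')) (max_lt ha hb)⟩

lemma exists_dist_smul_add_smul_lt (J₁ : (Fin k → ℝ) →ₗ[ℝ] (Fin n → ℝ))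
    (J₂ : (Fin l → ℝ) →ₗ[ℝ] (Fin n → ℝ)) {s₀ : ℝ} (hs₀ : s₀ ∈ Icc (0 : ℝ) 1)
    (x : Fin k → ℝ) (y : Fin l → ℝ) {ε : ℝ} (hε : 0 < ε) :
    ∃ s ∈ Ioo (0 : ℝ) 1, ∃ η > 0, ∀ x' y', dist x' x < η → dist y' y < η →
      dist (J₁ (s • x') + J₂ ((1 - s) • y')) (J₁ (s₀ • x) + J₂ ((1 - s₀) • y)) < ε := by
  have hJ₁ := J₁.continuous_of_finiteDimensional
  have hJ₂ := J₂.continuous_of_finiteDimensional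
  have hc : Continuous fun z : ℝ × (Fin k → ℝ) × (Fin l → ℝ) =>
      J₁ (z.1 • z.2.1) + J₂ ((1 - z.1) • z.2.2) := by fun_prop
  obtain ⟨η, hη, h⟩ := Metric.continuousAt_iff.1 (hc.continuousAt (x := (s₀, x, y))) ε hε
  rw [← closure_Ioo (zero_ne_one' ℝ)] at hs₀
  obtain ⟨s, hs, hs'⟩ := Metric.mem_closure_iff.1 hs₀ η hη
  rw [dist_comm] at hs'
  exact ⟨s, hs, η, hη, fun x' y' hx hy => h (x := (s, x', y')) (max_lt hs' (max_lt hx hy))⟩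

lemma denseMotion
    (S : IsSum N₁ M₁ N₂ M₂ N M J₁ J₂)
    (h₁ : DualNorms N₁ M₁) (h₂ : DualNorms N₂ M₂) (hd₁ : DenseMotion N₁ M₁)
    (hd₂ : DenseMotion N₂ M₂) : DenseMotion N M := by
  intro q p hq hp ε hε
  obtain ⟨a, b, rfl⟩ := S.exists_eq q
  obtain ⟨x, y, rfl⟩ := S.exists_eq p
  rw [S.norm_max, max_lt_iff] at hq
  rw [S.norm_add] at hp
  obtain ⟨x₀, hx₀, hx⟩ := h₁.symm.exists_unit_smul x
  obtain ⟨y₀, hy₀, hy⟩ := h₂.symm.exists_unit_smul y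
  rw [← eq_sub_iff_add_eq'] at hp
  rw [hp] at hy
  obtain ⟨η, hη, hnear⟩ := exists_dist_add_lt J₁ J₂ a b hε
  obtain ⟨s, hs, η', hη', hnear'⟩ := exists_dist_smul_add_smul_lt J₁ J₂
    (s₀ := M₁ x) ⟨apply_nonneg M₁ x, by linarith [apply_nonneg M₂ y]⟩ x₀ y₀ hε
  rw [← hx, ← hy] at hnear'
  obtain ⟨O₁, i₁, θ₁, hθ₁, hq₁, hp₁⟩ := hd₁ a x₀ hq.1 hx₀ (min η η') (lt_min hη hη')
  obtain ⟨O₂, i₂, θ₂, hθ₂, hq₂, hp₂⟩ := hd₂ b y₀ hq.2 hy₀ (min η η') (lt_min hη hη')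
  obtain ⟨C₁, t₁, ht₁, hte₁, hCq₁, hCp₁⟩ := O₁.exists_curve_motion h₁ i₁ hθ₁
  obtain ⟨C₂, t₂, ht₂, hte₂, hCq₂, hCp₂⟩ := O₂.exists_curve_motion h₂ i₂ hθ₂
  rw [← hCq₁, lt_min_iff] at hq₁
  rw [← hCp₁, lt_min_iff] at hp₁
  rw [← hCq₂, lt_min_iff] at hq₂
  rw [← hCp₂, lt_min_iff] at hp₂
  obtain ⟨C, b', hb', hCq, hCp, hCe, -⟩ := S.exists_curve_near h₁ h₂ hs C₁ C₂ ht₁ ht₂ hte₂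
    (sub_pos.2 hq₂.1)
  obtain ⟨O, i, θ, hθ, hOq, hOp⟩ := C.exists_orbit_of_notMem (by norm_num : (0 : ℝ) < 4)
    (fun h => hte₁ (hCe.1 h))
  refine ⟨O, i, θ, hθ, ?_, ?_⟩
  · rw [hOq, hCq]
    exact hnear _ _ hq₁.1 (by linarith [dist_triangle b' (C₂.q t₂) b])
  · rw [hOp, hCp]
    exact hnear' _ _ hp₁.2 hp₂.2

lemma exists_orbit_reflection
    (S : IsSum N₁ M₁ N₂ M₂ N M J₁ J₂) (h₁ : DualNorms N₁ M₁) (h₂ : DualNorms N₂ M₂)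
    (hd₁ : DenseReflection N₁ M₁) (hd₂ : DenseMotion N₂ M₂) {a x : Fin k → ℝ} {b y : Fin l → ℝ}
    (ha : N₁ a = 1) (hb : N₂ b ≤ 1) (hp : M₁ x + M₂ y < 1) {ε : ℝ} (hε : 0 < ε) :
    ∃ O : Orbit N M, ∃ i, ∃ θ ∈ Ioo (0 : ℝ) 1, dist (O.q i) (J₁ a + J₂ b) < ε ∧
      dist ((1 - θ) • O.p i + θ • O.p (i + 1)) (J₁ x + J₂ y) < ε := by
  obtain ⟨y₀, hy₀, hy⟩ := h₂.symm.exists_unit_smul y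
  have hMx := apply_nonneg M₁ x
  have hMy := apply_nonneg M₂ y
  have hs₀ : 0 < 1 - M₂ y := by linarith
  have hx₀ : M₁ ((1 - M₂ y)⁻¹ • x) < 1 := by
    rw [real_smul_norm _ (inv_nonneg.2 hs₀.le), inv_mul_lt_one₀ hs₀]
    linarith
  obtain ⟨η, hη, hnear⟩ := exists_dist_add_lt J₁ J₂ a b hε
  obtain ⟨s, hs, η', hη', hnear'⟩ := exists_dist_smul_add_smul_lt J₁ J₂
    (s₀ := 1 - M₂ y) ⟨hs₀.le, by linarith⟩ ((1 - M₂ y)⁻¹ • x) y₀ hε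
  rw [smul_inv_smul₀ hs₀.ne', sub_sub_cancel, ← hy] at hnear'
  obtain ⟨b₀, hb₀, hbb₀⟩ := exists_lt_one_dist_lt N₂ hb (half_pos hη)
  obtain ⟨O₁, i₁, θ, hθ, hq₁, hp₁⟩ := hd₁ a _ ha hx₀ (min η η') (lt_min hη hη')
  obtain ⟨O₂, i₂, θ₂, hθ₂, hq₂, hp₂⟩ := hd₂ b₀ y₀ hb₀ hy₀ (min (η / 2) η')
    (lt_min (half_pos hη) hη')
  obtain ⟨C₁, t₁, ht₁, hte₁, hCq₁, hCr₁⟩ := O₁.exists_curve_reflection h₁ i₁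
  obtain ⟨C₂, t₂, ht₂, hte₂, hCq₂, hCp₂⟩ := O₂.exists_curve_motion h₂ i₂ hθ₂
  rw [← hCq₁, lt_min_iff] at hq₁
  rw [lt_min_iff] at hp₁
  rw [← hCq₂, lt_min_iff] at hq₂
  rw [← hCp₂, lt_min_iff] at hp₂
  obtain ⟨C, b', hb', hCq, -, hCe, hCr⟩ := S.exists_curve_near h₁ h₂ hs C₁ C₂ ht₁ ht₂ hte₂
    (sub_pos.2 hq₂.1)
  obtain ⟨O, i, hOq, hOp, hOp'⟩ := C.exists_orbit_of_mem (by norm_num : (0 : ℝ) < 4)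
    (hCe.2 hte₁) (hCr hte₁ _ _ hCr₁)
  refine ⟨O, i, θ, hθ, ?_, ?_⟩
  · rw [hOq, hCq]
    refine hnear _ _ hq₁.1 ?_
    linarith [dist_triangle b' (C₂.q t₂) b, dist_triangle (C₂.q t₂) b₀ b]
  · have hcomb : (1 - θ) • O.p i + θ • O.p (i + 1) =
        J₁ (s • ((1 - θ) • O₁.p i₁ + θ • O₁.p (i₁ + 1))) + J₂ ((1 - s) • C₂.p t₂) := by
      rw [hOp, hOp']
      simp only [map_smul, map_add]
      module
    rw [hcomb]
    exact hnear' _ _ hp₁.2 hp₂.2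

lemma denseReflection
    (S : IsSum N₁ M₁ N₂ M₂ N M J₁ J₂) (h₁ : DualNorms N₁ M₁) (h₂ : DualNorms N₂ M₂)
    (hd₁ : DenseMotion N₁ M₁) (hd₁' : DenseReflection N₁ M₁) (hd₂ : DenseMotion N₂ M₂)
    (hd₂' : DenseReflection N₂ M₂) : DenseReflection N M := by
  intro q p hq hp ε hε
  obtain ⟨a, b, rfl⟩ := S.exists_eq q
  obtain ⟨x, y, rfl⟩ := S.exists_eq p
  rw [S.norm_max] at hq
  rw [S.norm_add] at hp
  rcases le_total (N₂ b) (N₁ a) with h | h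
  · rw [max_eq_left h] at hq
    exact S.exists_orbit_reflection h₁ h₂ hd₁' hd₂ hq (hq ▸ h) hp hε
  · rw [max_eq_right h] at hq
    rw [add_comm (J₁ a), add_comm (J₁ x)]
    rw [add_comm] at hp
    exact S.symm.exists_orbit_reflection h₂ h₁ hd₂' hd₁ hq (hq ▸ h) hp hε

end IsSum

/-- The absolute value of the only coordinate, as a norm on `ℝ¹`. -/
noncomputable def absNorm : Seminorm ℝ (Fin 1 → ℝ) := (normSeminorm ℝ ℝ).comp (LinearMap.proj 0)

lemma absNorm_apply (x : Fin 1 → ℝ) : absNorm x = |x 0| := rfl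

lemma pairing_fin_one (p q : Fin 1 → ℝ) : pairing p q = p 0 * q 0 := by
  simp [pairing]

lemma uniqueNormal_absNorm {x : Fin 1 → ℝ} (hx : absNorm x = 1) : UniqueNormal absNorm x x := by
  have hx2 : x 0 * x 0 = 1 := by
    rw [absNorm_apply] at hx
    rw [← abs_mul_abs_self, hx, one_mul]
  refine ⟨hx.le, by rw [pairing_fin_one, hx2], fun v _ hv => ?_⟩
  rw [pairing_fin_one] at hv
  ext i
  rw [Subsingleton.elim i 0]
  linear_combination (-v 0) * hx2 + x 0 * hv

lemma dualNorms_absNorm : DualNorms absNorm absNorm := by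
  have hc : Continuous absNorm := by
    change Continuous fun x : Fin 1 → ℝ => |x 0|
    exact (continuous_apply 0).abs
  have hn : ∀ q : Fin 1 → ℝ, ∃ p, absNorm p ≤ 1 ∧ pairing p q = absNorm q := by
    intro q
    rcases le_total 0 (q 0) with h | h
    · exact ⟨fun _ => 1, by simp [absNorm_apply], by
        simp [pairing_fin_one, absNorm_apply, abs_of_nonneg h]⟩
    · exact ⟨fun _ => -1, by simp [absNorm_apply], by
        simp [pairing_fin_one, absNorm_apply, abs_of_nonpos h]⟩
  have hu : ∃ q, absNorm q = 1 := ⟨fun _ => 1, by simp [absNorm_apply]⟩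
  refine ⟨hc, hc, fun p q => ?_, hn, fun p => ?_, hu, hu⟩
  · rw [pairing_fin_one, absNorm_apply, absNorm_apply, ← abs_mul]
    exact le_abs_self _
  · obtain ⟨q, hq, h⟩ := hn p
    exact ⟨q, hq, by rw [pairing_comm, h]⟩

/-- The orbit that bounces between `x` and `-x` on the line. -/
def segmentOrbit (x : Fin 1 → ℝ) (hx : absNorm x = 1) : Orbit absNorm absNorm :=
  have hnorm : ∀ i : ℕ, absNorm ((-1 : ℝ) ^ i • x) = 1 := fun i => by
    rw [map_smul_eq_mul, hx, norm_pow, norm_neg, norm_one, one_pow, one_mul]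
  have hinside : ∀ i : ℕ, ∀ θ ∈ Ioo (0 : ℝ) 1,
      absNorm ((1 - θ) • (-1 : ℝ) ^ i • x + θ • (-1 : ℝ) ^ (i + 1) • x) < 1 := fun i θ hθ => by
    have : (1 - θ) • (-1 : ℝ) ^ i • x + θ • (-1 : ℝ) ^ (i + 1) • x =
        (1 - 2 * θ) • (-1 : ℝ) ^ i • x := by
      rw [pow_succ]; module
    rw [this, map_smul_eq_mul, hnorm, mul_one, Real.norm_eq_abs, abs_lt]
    constructor <;> linarith [hθ.1, hθ.2]
  { m := 2
    m_pos := two_pos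
    q := fun i => (-1 : ℝ) ^ i • x
    p := fun i => (-1 : ℝ) ^ i • x
    nq := fun i => (-1 : ℝ) ^ i • x
    np := fun i => (-1 : ℝ) ^ i • x
    lam := fun _ => 2
    mu := fun _ => 2
    q_norm := hnorm
    p_norm := hnorm
    q_periodic := fun i => by rw [pow_add, neg_one_sq, mul_one]
    p_periodic := fun i => by rw [pow_add, neg_one_sq, mul_one]
    nq_spec := fun i => uniqueNormal_absNorm (hnorm i)
    np_spec := fun i => uniqueNormal_absNorm (hnorm i)
    lam_pos := fun _ => two_pos
    mu_pos := fun _ => two_pos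
    reflection := fun i => by rw [pow_succ]; module
    motion := fun i => by rw [pow_succ]; module
    sum_mu := by norm_num
    q_inside := hinside
    p_inside := hinside }

lemma denseReflection_absNorm : DenseReflection absNorm absNorm := by
  intro q p hq hp ε hε
  have hq2 : q 0 * q 0 = 1 := by
    rw [absNorm_apply] at hq
    rw [← abs_mul_abs_self, hq, one_mul]
  have hpq : |p 0 * q 0| < 1 := by
    rw [abs_mul, ← absNorm_apply, ← absNorm_apply, hq, mul_one]; exact hp
  rw [abs_lt] at hpq
  refine ⟨segmentOrbit q hq, 0, (1 - p 0 * q 0) / 2,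
    ⟨by linarith [hpq.2], by linarith [hpq.1]⟩, ?_, ?_⟩
  · simpa [segmentOrbit] using hε
  · have : (1 - (1 - p 0 * q 0) / 2) • (segmentOrbit q hq).p 0 +
        ((1 - p 0 * q 0) / 2) • (segmentOrbit q hq).p (0 + 1) = p := by
      ext i
      rw [Subsingleton.elim i 0]
      simp only [segmentOrbit, Pi.add_apply, Pi.smul_apply, smul_eq_mul, pow_zero, zero_add,
        pow_one]
      linear_combination p 0 * hq2
    rwa [this, dist_self]

section Append

variable {k l : ℕ}

/-- The restriction to the first `k` coordinates as a linear map. -/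
def splitLₗ : (Fin (k + l) → ℝ) →ₗ[ℝ] (Fin k → ℝ) := LinearMap.funLeft ℝ ℝ (Fin.castAdd l)

/-- The restriction to the last `l` coordinates as a linear map. -/
def splitRₗ : (Fin (k + l) → ℝ) →ₗ[ℝ] (Fin l → ℝ) := LinearMap.funLeft ℝ ℝ (Fin.natAdd k)

/-- The inclusion of the first `k` coordinates. -/
def inlₗ : (Fin k → ℝ) →ₗ[ℝ] (Fin (k + l) → ℝ) where
  toFun x := Fin.append x 0
  map_add' x y := by
    ext i
    refine Fin.addCases (fun i => ?_) (fun i => ?_) i <;> simp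
  map_smul' c x := by
    ext i
    refine Fin.addCases (fun i => ?_) (fun i => ?_) i <;> simp

/-- The inclusion of the last `l` coordinates. -/
def inrₗ : (Fin l → ℝ) →ₗ[ℝ] (Fin (k + l) → ℝ) where
  toFun y := Fin.append 0 y
  map_add' x y := by
    ext i
    refine Fin.addCases (fun i => ?_) (fun i => ?_) i <;> simp
  map_smul' c x := by
    ext i
    refine Fin.addCases (fun i => ?_) (fun i => ?_) i <;> simp

lemma inlₗ_add_inrₗ (x : Fin k → ℝ) (y : Fin l → ℝ) : inlₗ x + inrₗ y = Fin.append x y := by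
  ext i
  refine Fin.addCases (fun i => ?_) (fun i => ?_) i <;> simp [inlₗ, inrₗ]

lemma splitL_append (x : Fin k → ℝ) (y : Fin l → ℝ) : splitL (Fin.append x y) = x := by
  ext i; simp [splitL]

lemma splitR_append (x : Fin k → ℝ) (y : Fin l → ℝ) : splitR (Fin.append x y) = y := by
  ext i; simp [splitR]

lemma append_split (z : Fin (k + l) → ℝ) : Fin.append (splitL z) (splitR z) = z := by
  ext i
  refine Fin.addCases (fun i => ?_) (fun i => ?_) i <;> simp [splitL, splitR]

/-- The maximum of norms on the two blocks of coordinates. -/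
noncomputable def maxNorm (N₁ : Seminorm ℝ (Fin k → ℝ)) (N₂ : Seminorm ℝ (Fin l → ℝ)) :
    Seminorm ℝ (Fin (k + l) → ℝ) := N₁.comp splitLₗ ⊔ N₂.comp splitRₗ

/-- The sum of norms on the two blocks of coordinates. -/
noncomputable def addNorm (N₁ : Seminorm ℝ (Fin k → ℝ)) (N₂ : Seminorm ℝ (Fin l → ℝ)) :
    Seminorm ℝ (Fin (k + l) → ℝ) := N₁.comp splitLₗ + N₂.comp splitRₗ

variable {N₁ M₁ : Seminorm ℝ (Fin k → ℝ)} {N₂ M₂ : Seminorm ℝ (Fin l → ℝ)}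

lemma maxNorm_apply (z : Fin (k + l) → ℝ) :
    maxNorm N₁ N₂ z = max (N₁ (splitL z)) (N₂ (splitR z)) := rfl

lemma addNorm_apply (z : Fin (k + l) → ℝ) :
    addNorm N₁ N₂ z = N₁ (splitL z) + N₂ (splitR z) := rfl

lemma continuous_splitL : Continuous (splitL : (Fin (k + l) → ℝ) → Fin k → ℝ) :=
  continuous_pi fun _ => continuous_apply _

lemma continuous_splitR : Continuous (splitR : (Fin (k + l) → ℝ) → Fin l → ℝ) :=
  continuous_pi fun _ => continuous_apply _

lemma isSum_append : IsSum N₁ M₁ N₂ M₂ (maxNorm N₁ N₂) (addNorm M₁ M₂) inlₗ inrₗ where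
  pairing_eq x y a b := by
    rw [inlₗ_add_inrₗ, inlₗ_add_inrₗ]
    simp [pairing, Fin.sum_univ_add]
  exists_eq z := ⟨splitL z, splitR z, by rw [inlₗ_add_inrₗ, append_split]⟩
  norm_max a b := by rw [inlₗ_add_inrₗ, maxNorm_apply, splitL_append, splitR_append]
  norm_add a b := by rw [inlₗ_add_inrₗ, addNorm_apply, splitL_append, splitR_append]

lemma dualNorms_append (h₁ : DualNorms N₁ M₁) (h₂ : DualNorms N₂ M₂) :
    DualNorms (maxNorm N₁ N₂) (addNorm M₁ M₂) :=
  isSum_append.dualNorms h₁ h₂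
    ((h₁.cont_left.comp continuous_splitL).max (h₂.cont_left.comp continuous_splitR))
    ((h₁.cont_right.comp continuous_splitL).add (h₂.cont_right.comp continuous_splitR))

lemma sumInfty_unitBalls :
    sumInfty {x | N₁ x ≤ 1} {y | N₂ y ≤ 1} = {z | maxNorm N₁ N₂ z ≤ 1} := by
  ext z
  change (N₁ (splitL z) ≤ 1 ∧ N₂ (splitR z) ≤ 1) ↔ max (N₁ (splitL z)) (N₂ (splitR z)) ≤ 1
  exact max_le_iff.symm

lemma sumOne_unitBalls (h₁ : DualNorms N₁ M₁) (h₂ : DualNorms N₂ M₂) :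
    sumOne {x | N₁ x ≤ 1} {y | N₂ y ≤ 1} = {z | addNorm N₁ N₂ z ≤ 1} := by
  apply Subset.antisymm
  · refine convexHull_min ?_ ?_
    · rintro z (⟨hL, hR⟩ | ⟨hL, hR⟩)
      · change addNorm N₁ N₂ z ≤ 1
        rw [addNorm_apply, hR, map_zero, add_zero]
        exact hL
      · change addNorm N₁ N₂ z ≤ 1
        rw [addNorm_apply, hL, map_zero, zero_add]
        exact hR
    · simpa using (addNorm N₁ N₂).convexOn.convex_le 1
  · intro z hz
    change addNorm N₁ N₂ z ≤ 1 at hz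
    obtain ⟨a, ha, hza⟩ := h₁.exists_unit_smul (splitL z)
    obtain ⟨b, hb, hzb⟩ := h₂.exists_unit_smul (splitR z)
    have hleft : Fin.append a 0 ∈ sumOne {x | N₁ x ≤ 1} {y | N₂ y ≤ 1} :=
      subset_convexHull ℝ _ (Or.inl ⟨by rw [splitL_append]; exact ha.le, splitR_append _ _⟩)
    have hright : Fin.append 0 b ∈ sumOne {x | N₁ x ≤ 1} {y | N₂ y ≤ 1} :=
      subset_convexHull ℝ _ (Or.inr ⟨splitL_append _ _, by rw [splitR_append]; exact hb.le⟩)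
    have hzero : (0 : Fin (k + l) → ℝ) ∈ sumOne {x | N₁ x ≤ 1} {y | N₂ y ≤ 1} := by
      refine subset_convexHull ℝ _ (Or.inl ⟨?_, rfl⟩)
      change N₁ 0 ≤ 1
      rw [map_zero]
      exact zero_le_one
    have hconv : Convex ℝ (sumOne {x | N₁ x ≤ 1} {y | N₂ y ≤ 1}) := convex_convexHull ℝ _
    rw [addNorm_apply] at hz
    have hz_eq : z = N₁ (splitL z) • Fin.append a 0 + N₂ (splitR z) • Fin.append 0 b +
        (1 - N₁ (splitL z) - N₂ (splitR z)) • (0 : Fin (k + l) → ℝ) := by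
      rw [smul_zero, add_zero]
      conv_lhs => rw [← append_split z, ← inlₗ_add_inrₗ, hza, hzb, map_smul, map_smul]
      rfl
    rw [hz_eq]
    have h3 := hconv.sum_mem (t := Finset.univ)
      (w := ![N₁ (splitL z), N₂ (splitR z), 1 - N₁ (splitL z) - N₂ (splitR z)])
      (z := ![Fin.append a 0, Fin.append 0 b, 0])
      (by
        intro i _
        fin_cases i
        · exact apply_nonneg N₁ _
        · exact apply_nonneg N₂ _
        · change 0 ≤ 1 - N₁ (splitL z) - N₂ (splitR z)
          linarith)
      (by simp [Fin.sum_univ_three])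
      (by
        intro i _
        fin_cases i
        · exact hleft
        · exact hright
        · exact hzero)
    simpa [Fin.sum_univ_three] using h3

end Append

/-- Hanner polytopes are unit balls of norms for which minimal orbits are dense. -/
lemma IsHanner.exists_norms {n : ℕ} {H : Set (Fin n → ℝ)} (hH : IsHanner n H) :
    ∃ N M : Seminorm ℝ (Fin n → ℝ), DualNorms N M ∧ DenseMotion N M ∧ DenseReflection N M ∧
      H = {q | N q ≤ 1} := by
  induction hH with
  | segment =>
    exact ⟨absNorm, absNorm, dualNorms_absNorm, denseReflection_absNorm.dual,
      denseReflection_absNorm, rfl⟩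
  | inftySum _ _ ih₁ ih₂ =>
    obtain ⟨N₁, M₁, h₁, hd₁, hd₁', rfl⟩ := ih₁
    obtain ⟨N₂, M₂, h₂, hd₂, hd₂', rfl⟩ := ih₂
    exact ⟨maxNorm N₁ N₂, addNorm M₁ M₂, dualNorms_append h₁ h₂,
      isSum_append.denseMotion h₁ h₂ hd₁ hd₂,
      isSum_append.denseReflection h₁ h₂ hd₁ hd₁' hd₂ hd₂', sumInfty_unitBalls⟩
  | oneSum _ _ ih₁ ih₂ =>
    obtain ⟨N₁, M₁, h₁, hd₁, hd₁', rfl⟩ := ih₁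
    obtain ⟨N₂, M₂, h₂, hd₂, hd₂', rfl⟩ := ih₂
    exact ⟨addNorm N₁ N₂, maxNorm M₁ M₂, (dualNorms_append h₁.symm h₂.symm).symm,
      (isSum_append.denseReflection h₁.symm h₂.symm hd₁'.dual hd₁.dual hd₂'.dual hd₂.dual).dual,
      (isSum_append.denseMotion h₁.symm h₂.symm hd₁'.dual hd₂'.dual).dual,
      sumOne_unitBalls h₁ h₂⟩

lemma Orbit.mod_period_add {n : ℕ} {N M : Seminorm ℝ (Fin n → ℝ)} (O : Orbit N M) (i : ℕ) :
    (∀ j, O.q (i % O.m + j) = O.q (i + j)) ∧ ∀ j, O.p (i % O.m + j) = O.p (i + j) := by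
  have hi : ∀ j, i + j = i % O.m + j + i / O.m * O.m := fun j => by
    conv_lhs => rw [← Nat.mod_add_div i O.m]
    ring
  exact ⟨fun j => by rw [hi, O.q_add_mul_period], fun j => by rw [hi, O.p_add_mul_period]⟩

lemma Orbit.mem_trace_motion {n : ℕ} {N M : Seminorm ℝ (Fin n → ℝ)} (O : Orbit N M)
    (h : DualNorms N M) (i : ℕ) {θ : ℝ} (hθ : θ ∈ Ioo (0 : ℝ) 1) :
    ((1 - θ) • O.q i + θ • O.q (i + 1), O.p (i + 1)) ∈ (O.toClassicalTraj h).trace := by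
  obtain ⟨hq, hp⟩ := O.mod_period_add i
  have hq0 : O.q (i % O.m) = O.q i := hq 0
  refine mem_biUnion (Finset.mem_range.2 (Nat.mod_lt i O.m_pos))
    (Or.inl ⟨(1 - θ) • O.q (i % O.m) + θ • O.q (i % O.m + 1), ?_, ?_⟩)
  · exact ⟨1 - θ, θ, by linarith [hθ.2], hθ.1.le, by ring, rfl⟩
  · change ((1 - θ) • O.q (i % O.m) + θ • O.q (i % O.m + 1), O.p (i % O.m + 1)) = _
    rw [hq0, hq, hp]

lemma Orbit.mem_trace_reflection {n : ℕ} {N M : Seminorm ℝ (Fin n → ℝ)} (O : Orbit N M)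
    (h : DualNorms N M) (i : ℕ) {θ : ℝ} (hθ : θ ∈ Ioo (0 : ℝ) 1) :
    (O.q i, (1 - θ) • O.p i + θ • O.p (i + 1)) ∈ (O.toClassicalTraj h).trace := by
  obtain ⟨hq, hp⟩ := O.mod_period_add i
  have hq0 : O.q (i % O.m) = O.q i := hq 0
  have hp0 : O.p (i % O.m) = O.p i := hp 0
  refine mem_biUnion (Finset.mem_range.2 (Nat.mod_lt i O.m_pos))
    (Or.inr ⟨(1 - θ) • O.p (i % O.m) + θ • O.p (i % O.m + 1), ?_, ?_⟩)
  · exact ⟨1 - θ, θ, by linarith [hθ.2], hθ.1.le, by ring, rfl⟩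
  · change (O.q (i % O.m), (1 - θ) • O.p (i % O.m) + θ • O.p (i % O.m + 1)) = _
    rw [hq0, hp0, hp]

lemma DualNorms.mem_frontier_prod {n : ℕ} {N M : Seminorm ℝ (Fin n → ℝ)} (h : DualNorms N M)
    {q p : Fin n → ℝ} (hz : (q, p) ∈ frontier ({q | N q ≤ 1} ×ˢ {p | M p ≤ 1})) :
    N q ≤ 1 ∧ M p ≤ 1 ∧ (N q = 1 ∨ M p = 1) := by
  have hcN : IsClosed {q | N q ≤ 1} := isClosed_le h.cont_left continuous_const
  have hcM : IsClosed {p | M p ≤ 1} := isClosed_le h.cont_right continuous_const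
  rw [(hcN.prod hcM).frontier_eq, interior_prod_eq] at hz
  obtain ⟨⟨hq, hp⟩, hint⟩ := hz
  refine ⟨hq, hp, ?_⟩
  by_contra! hne
  have hq' : N q < 1 := lt_of_le_of_ne hq hne.1
  have hp' : M p < 1 := lt_of_le_of_ne hp hne.2
  refine hint ⟨?_, ?_⟩
  · exact mem_interior.2 ⟨{q | N q < 1}, fun x (hx : N x < 1) => show N x ≤ 1 from hx.le,
      isOpen_lt h.cont_left continuous_const, hq'⟩
  · exact mem_interior.2 ⟨{p | M p < 1}, fun x (hx : M x < 1) => show M x ≤ 1 from hx.le,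
      isOpen_lt h.cont_right continuous_const, hp'⟩

end Billiard

open Billiard in
/-- For a Hanner polytope `H ⊂ ℝⁿ`, in an arbitrarily small neighborhood of any point of
`∂(H × H°)` there passes a closed classical billiard trajectory of the minimal length 4
in the configuration `H × H°`. -/
theorem hanner_minimal_trajectories_dense (n : ℕ) (H : Set (Fin n → ℝ))
    (hH : IsHanner n H) :
    ∀ z ∈ frontier (H ×ˢ polarSet H), ∀ ε : ℝ, 0 < ε →
      ∃ τ : ClassicalTraj n H (polarSet H), τ.length = 4 ∧
        ∃ w ∈ τ.trace, dist z w < ε := by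
  rintro ⟨q, p⟩ hz ε hε
  obtain ⟨N, M, h, hmotion, hreflection, rfl⟩ := hH.exists_norms
  rw [h.polarSet_eq] at hz ⊢
  obtain ⟨hq, hp, hqp⟩ := h.mem_frontier_prod hz
  rcases hp.lt_or_eq with hp' | hp'
  · obtain ⟨O, i, θ, hθ, h1, h2⟩ :=
      hreflection q p (hqp.resolve_right hp'.ne) hp' ε hε
    refine ⟨O.toClassicalTraj h, O.length_toClassicalTraj h, _, O.mem_trace_reflection h i hθ, ?_⟩
    rw [dist_comm]
    exact max_lt h1 h2
  · obtain ⟨q', hq', hqq'⟩ := exists_lt_one_dist_lt N hq (half_pos hε)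
    obtain ⟨O, i, θ, hθ, h1, h2⟩ := hmotion q' p hq' hp' (ε / 2) (half_pos hε)
    refine ⟨O.toClassicalTraj h, O.length_toClassicalTraj h, _, O.mem_trace_motion h i hθ, ?_⟩
    rw [dist_comm]
    refine max_lt ?_ (by linarith)
    change dist ((1 - θ) • O.q i + θ • O.q (i + 1)) q < ε
    linarith [dist_triangle ((1 - θ) • O.q i + θ • O.q (i + 1)) q' q]
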